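/- arXiv:2508.04365 — 2 statements merged into one kernel-verified Lean document; each statement's English description precedes it below -/
import Mathlib

section
/- For every integer n ≥ 1, p₁(n) − p₁(n+1) = p₂(n) + τ_e(n) − τ_o(n), where p₁, p₂, τ_e, τ_o are as defined in the context. -/
/-!
The generating functions of `p₁`, `p₂` and `τ_e - τ_o` are, with `(a; p)_m = ∏_{i<m} (1 - a p^i)`,

* `P₁ = ∑_{m ≥ 1} q^{2m} / (1 - q^{2m}) · (q; q²)_{m-1}`,
* `P₂ = ∑_{m ≥ 1} q^{2m} / (1 - q^{2m}) / (-q; q)_{m-1}`,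
* `T = Even - Odd`, where `Even = ∑ q^{2m} / (1 - q^{2m})`, `Odd = ∑ q^{2m-1} / (1 - q^{2m-1})`,

and the claim is the coefficient of `q^{n+1}` in `(q - 1) P₁ = q (P₂ + T)`.

Telescoping rewrites the two sides through `∑ q^{2m} / (1 - q^{2m}) · (q; q²)_m` and
`∑ q^m / (1 - q^m) / (-q; q)_m` (`first_step`, `second_step`), and a second telescoping, in the
base point of the Pochhammer symbols, turns these into sums of tails (`tails_odd`, `tails_plus`).
What remains (`tails_compare`) is
`Odd + ∑_{k ≥ 0} (1 / (-q^{k+1}; q)_∞ - 1) = ∑_{k ≥ 1} ((q^{2k+1}; q²)_∞ - 1)`.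
Multiplied by `(-q; q)_∞ = 1 / (q; q²)_∞` this says that the sum of the largest parts over
partitions of `n` into distinct parts equals the sum of `(L - 1) / 2 + ℓ` over partitions of `n`
into odd parts, `L` being the largest part and `ℓ` the number of parts. This is a consequence of
Sylvester's bijection, and is proved here (`sylvester_weighted`) by expanding both sides in
Gaussian binomials, using Gauss' identity `∑_k q^k [n choose k]_{q²} = (-q; q)_n`.

To avoid questions of convergence the series identities are proved in an arbitrary commutative
ring with an element `q` such that `q ^ N = 0`; there every sum and product is finite. They are
then applied to the class of `X` in `ℤ⟦X⟧ / (X ^ N)`. The link with partitions is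
Mathlib's `Nat.Partition.genFun`, applied for each value of the largest part (`sum_sup_eq`).
-/

open scoped Classical

/-- The predicate defining the partitions counted by `p₁`: the largest part is even, and
every part smaller than the largest part is odd, appears exactly once, and is not equal to
one less than the largest part. -/
def P1Cond {n : ℕ} (π : n.Partition) : Prop :=
  Even (π.parts.sup) ∧
    ∀ p ∈ π.parts, p < π.parts.sup →
      (Odd p ∧ π.parts.count p = 1 ∧ p ≠ π.parts.sup - 1)

/-- The predicate defining the partitions counted by `p₂`: the largest part is even, and no
number between (and including) half the largest part and one less than the largest part
appears as a part. -/
def P2Cond {n : ℕ} (π : n.Partition) : Prop :=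
  Even (π.parts.sup) ∧
    ∀ p ∈ π.parts, ¬(π.parts.sup / 2 ≤ p ∧ p ≤ π.parts.sup - 1)

/-- `p₁(n)`: the weighted count of partitions of `n` satisfying `P1Cond`, each partition `π`
weighted by `(-1)^{#_o(π)}`, where `#_o(π)` is the number of odd parts of `π`. -/
noncomputable def p1 (n : ℕ) : ℤ :=
  ∑ π : n.Partition,
    if P1Cond π then (-1 : ℤ) ^ (Multiset.card (π.parts.filter fun p => Odd p)) else 0

/-- `p₂(n)`: the weighted count of partitions of `n` satisfying `P2Cond`, each partition `π`
weighted by `(-1)^{#(π) - λ(π)}`, where `#(π)` is the number of parts and `λ(π)` is the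
number of appearances of the largest part. -/
noncomputable def p2 (n : ℕ) : ℤ :=
  ∑ π : n.Partition,
    if P2Cond π then
      (-1 : ℤ) ^ (Multiset.card π.parts - π.parts.count (π.parts.sup)) else 0

/-- `τ_e(n)`: the number of even positive divisors of `n`. -/
noncomputable def tauE (n : ℕ) : ℤ := ((n.divisors.filter fun d => Even d).card : ℤ)

/-- `τ_o(n)`: the number of odd positive divisors of `n`. -/
noncomputable def tauO (n : ℕ) : ℤ := ((n.divisors.filter fun d => Odd d).card : ℤ)

/-! ### Finite Pochhammer symbols for a nilpotent base -/

namespace P1P2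
section Ring
variable {R : Type*} [CommRing R]

/-- `1 / (1 - q^k)` when `q ^ N = 0` and `k ≥ 1`, as a truncated geometric series. -/
def geo (q : R) (N k : ℕ) : R := ∑ j ∈ Finset.range N, (q ^ k) ^ j

/-- `1 / (1 + q^k)` when `q ^ N = 0` and `k ≥ 1`, as a truncated geometric series. -/
def altGeo (q : R) (N k : ℕ) : R := ∑ j ∈ Finset.range N, (-q ^ k) ^ j

/-- `(q^{2k+1}; q²)_m`. -/
def oddPoch (q : R) (k m : ℕ) : R := ∏ i ∈ Finset.range m, (1 - q ^ (2 * (k + i) + 1))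

/-- `1 / (-q^{k+1}; q)_m` when `q ^ N = 0`. -/
def invPoch (q : R) (N k m : ℕ) : R := ∏ i ∈ Finset.range m, altGeo q N (k + i + 1)

/-- `(-q; q)_m`. -/
def plusPoch (q : R) (m : ℕ) : R := ∏ i ∈ Finset.range m, (1 + q ^ (i + 1))

/-- `1 / (q; q²)_m` when `q ^ N = 0`. -/
def invOdd (q : R) (N m : ℕ) : R := ∏ i ∈ Finset.range m, geo q N (2 * i + 1)

variable {q : R} {N : ℕ}

lemma pow_zero_of_le (hq : q ^ N = 0) {k : ℕ} (hk : N ≤ k) : q ^ k = 0 :=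
  pow_eq_zero_of_le hk hq

lemma one_sub_mul_geo (hq : q ^ N = 0) {k : ℕ} (hk : 1 ≤ k) : (1 - q ^ k) * geo q N k = 1 := by
  rw [geo, mul_neg_geom_sum, ← pow_mul, pow_zero_of_le hq (Nat.le_mul_of_pos_left N hk), sub_zero]

lemma one_add_mul_altGeo (hq : q ^ N = 0) {k : ℕ} (hk : 1 ≤ k) :
    (1 + q ^ k) * altGeo q N k = 1 := by
  have h := mul_neg_geom_sum (-q ^ k) N
  rw [sub_neg_eq_add] at h
  rw [altGeo, h, neg_pow, ← pow_mul, pow_zero_of_le hq (Nat.le_mul_of_pos_left N hk), mul_zero,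
    sub_zero]

lemma oddPoch_succ (k m : ℕ) :
    oddPoch q k (m + 1) = oddPoch q k m * (1 - q ^ (2 * (k + m) + 1)) := by
  rw [oddPoch, Finset.prod_range_succ, oddPoch]

lemma oddPoch_succ' (k m : ℕ) :
    oddPoch q k (m + 1) = (1 - q ^ (2 * k + 1)) * oddPoch q (k + 1) m := by
  rw [oddPoch, Finset.prod_range_succ', oddPoch, mul_comm, add_zero]
  congr 1
  exact Finset.prod_congr rfl fun i _ => by rw [add_right_comm k 1 i, add_assoc k i 1]

lemma invPoch_succ (k m : ℕ) :
    invPoch q N k (m + 1) = invPoch q N k m * altGeo q N (k + m + 1) := by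
  rw [invPoch, Finset.prod_range_succ, invPoch]

lemma invPoch_succ' (k m : ℕ) :
    invPoch q N k (m + 1) = altGeo q N (k + 1) * invPoch q N (k + 1) m := by
  rw [invPoch, Finset.prod_range_succ', invPoch, mul_comm, add_zero]
  congr 1
  exact Finset.prod_congr rfl fun i _ => by rw [add_right_comm k 1 i, add_assoc k i 1]

lemma plusPoch_succ (m : ℕ) : plusPoch q (m + 1) = plusPoch q m * (1 + q ^ (m + 1)) := by
  rw [plusPoch, Finset.prod_range_succ, plusPoch]

lemma invOdd_succ (m : ℕ) : invOdd q N (m + 1) = invOdd q N m * geo q N (2 * m + 1) := by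
  rw [invOdd, Finset.prod_range_succ, invOdd]

lemma oddPoch_mul_invOdd (hq : q ^ N = 0) (m : ℕ) : oddPoch q 0 m * invOdd q N m = 1 := by
  rw [oddPoch, invOdd, ← Finset.prod_mul_distrib]
  refine Finset.prod_eq_one fun i _ => ?_
  rw [zero_add]
  exact one_sub_mul_geo hq (by omega)

/-- `(-q; q)_k / (-q; q)_{k+m} = 1 / (-q^(k+1); q)_m`. -/
lemma plusPoch_add_mul_invPoch (hq : q ^ N = 0) (k m : ℕ) :
    plusPoch q (k + m) * invPoch q N k m = plusPoch q k := by
  induction m with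
  | zero => simp [invPoch]
  | succ m ih =>
    rw [← add_assoc, plusPoch_succ, invPoch_succ, mul_mul_mul_comm, ih,
      one_add_mul_altGeo hq (by omega), mul_one]

/-- `(q^{2k+1}; q²)_m / (q; q²)_{k+m} = 1 / (q; q²)_k`. -/
lemma invOdd_add_mul_oddPoch (hq : q ^ N = 0) (k m : ℕ) :
    invOdd q N (k + m) * oddPoch q k m = invOdd q N k := by
  induction m with
  | zero => simp [oddPoch]
  | succ m ih =>
    rw [← add_assoc, invOdd_succ, oddPoch_succ, mul_mul_mul_comm, ih, mul_comm (geo _ _ _),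
      one_sub_mul_geo hq (by omega), mul_one]

lemma plusPoch_of_le (hq : q ^ N = 0) (m : ℕ) : plusPoch q (N + m) = plusPoch q N := by
  induction m with
  | zero => rfl
  | succ m ih => rw [← add_assoc, plusPoch_succ, ih, pow_zero_of_le hq (by omega)]; ring

lemma invOdd_of_le (hq : q ^ N = 0) (m : ℕ) : invOdd q N (N + m) = invOdd q N N := by
  induction m with
  | zero => rfl
  | succ m ih =>
    have h := one_sub_mul_geo hq (k := 2 * (N + m) + 1) (by omega)
    rw [pow_zero_of_le hq (by omega), sub_zero, one_mul] at h
    rw [← add_assoc, invOdd_succ, ih, h, mul_one]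

/-- Euler's identity `(-q; q)_∞ = 1 / (q; q²)_∞`. -/
lemma plusPoch_eq_invOdd (hq : q ^ N = 0) : plusPoch q N = invOdd q N N := by
  let e (m : ℕ) : R := ∏ i ∈ Finset.range m, (1 - q ^ (i + 1))
  have e_succ (m : ℕ) : e (m + 1) = e m * (1 - q ^ (m + 1)) := Finset.prod_range_succ _ _
  -- `(-q; q)_m (q; q)_m (q; q²)_m = (q; q)_{2m}`
  have h1 (m : ℕ) : plusPoch q m * e m * oddPoch q 0 m = e (2 * m) := by
    induction m with
    | zero => simp [e, plusPoch, oddPoch]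
    | succ m ih =>
      rw [show 2 * (m + 1) = 2 * m + 1 + 1 by ring, e_succ (2 * m + 1), e_succ (2 * m), ← ih,
        plusPoch_succ, e_succ m, oddPoch_succ]
      ring
  have h2 (m : ℕ) : e (N + m) = e N := by
    induction m with
    | zero => rfl
    | succ m ih => rw [← add_assoc, e_succ, ih, pow_zero_of_le hq (by omega)]; ring
  have h3 (m : ℕ) : e m * ∏ i ∈ Finset.range m, geo q N (i + 1) = 1 := by
    rw [← Finset.prod_mul_distrib]
    exact Finset.prod_eq_one fun i _ => one_sub_mul_geo hq (by omega)
  have h4 := h1 N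
  rw [two_mul, h2] at h4
  have h5 := h3 N
  have h6 := oddPoch_mul_invOdd hq N
  linear_combination (∏ i ∈ Finset.range N, geo q N (i + 1)) * invOdd q N N * h4 -
    plusPoch q N * e N * (∏ i ∈ Finset.range N, geo q N (i + 1)) * h6 -
    plusPoch q N * h5 + invOdd q N N * h5 

/-! ### Reduction to sums of tails -/

/-- `(q - 1) P₁ = q ∑ q^{2m} / (1 - q^{2m}) · (q; q²)_m - q (1 - (q; q²)_∞)`. Here and below
`geo q N k - 1` plays the role of `q^k / (1 - q^k)`. -/
lemma first_step (hq : q ^ N = 0) :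
    (q - 1) * ∑ m ∈ Finset.range N, (geo q N (2 * m + 2) - 1) * oddPoch q 0 m =
      q * ∑ m ∈ Finset.range N, (geo q N (2 * m + 2) - 1) * oddPoch q 0 (m + 1)
        - q * (1 - oddPoch q 0 N) := by
  have h := Finset.sum_range_sub' (oddPoch q 0) N
  rw [show oddPoch q 0 0 = 1 by simp [oddPoch]] at h
  rw [← h, Finset.mul_sum, Finset.mul_sum, Finset.mul_sum, ← Finset.sum_sub_distrib]
  refine Finset.sum_congr rfl fun m _ => ?_
  have hg := one_sub_mul_geo hq (k := 2 * m + 2) (by omega)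
  rw [oddPoch_succ, zero_add]
  linear_combination (- oddPoch q 0 m) * hg

/-- `P₂ = ∑ q^m / (1 - q^m) / (-q; q)_m - (1 - 1 / (-q; q)_∞)`. -/
lemma second_step (hq : q ^ N = 0) :
    ∑ m ∈ Finset.range N, (geo q N (2 * m + 2) - 1) * invPoch q N 0 m =
      ∑ m ∈ Finset.range N, (geo q N (m + 1) - 1) * invPoch q N 0 (m + 1)
        - (1 - invPoch q N 0 N) := by
  have h := Finset.sum_range_sub' (invPoch q N 0) N
  rw [show invPoch q N 0 0 = 1 by simp [invPoch]] at h
  rw [← h, ← Finset.sum_sub_distrib]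
  refine Finset.sum_congr rfl fun m _ => ?_
  have h2 := one_sub_mul_geo hq (k := 2 * m + 2) (by omega)
  have h1 := one_sub_mul_geo hq (k := m + 1) (by omega)
  have h0 := one_add_mul_altGeo hq (k := m + 1) (by omega)
  have h3 : geo q N (2 * m + 2) = geo q N (m + 1) * altGeo q N (m + 1) := by
    linear_combination (-geo q N (2 * m + 2)) * h1 -
      geo q N (2 * m + 2) * (1 - q ^ (m + 1)) * geo q N (m + 1) * h0 +
      geo q N (m + 1) * altGeo q N (m + 1) * h2
  rw [invPoch_succ, zero_add, h3]
  linear_combination (0 : R) * h1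

/-- Sum-of-tails form of the series in `first_step`, obtained by telescoping the series with
`(q^{2k+1}; q²)_m` in place of `(q; q²)_m` from `k = 0` to `k = N`, where it equals `Even`. -/
lemma tails_odd (hq : q ^ N = 0) :
    ∑ m ∈ Finset.range N, (geo q N (2 * m + 2) - 1) * oddPoch q 0 (m + 1) =
      ∑ m ∈ Finset.range N, (geo q N (2 * m + 2) - 1)
        - ∑ k ∈ Finset.range N, (1 - oddPoch q (k + 1) N) := by
  let c (k : ℕ) : R := ∑ m ∈ Finset.range N, (geo q N (2 * m + 2) - 1) * oddPoch q k (m + 1)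
  have hc (k : ℕ) : c (k + 1) - c k = 1 - oddPoch q (k + 1) N := by
    have h := Finset.sum_range_sub' (oddPoch q (k + 1)) N
    rw [show oddPoch q (k + 1) 0 = 1 by simp [oddPoch]] at h
    rw [← h, ← Finset.sum_sub_distrib]
    refine Finset.sum_congr rfl fun m _ => ?_
    have hg := one_sub_mul_geo hq (k := 2 * m + 2) (by omega)
    rw [oddPoch_succ' k m, oddPoch_succ (k + 1) m]
    linear_combination (q ^ (2 * k + 1) * oddPoch q (k + 1) m) * hg
  have hN : c N = ∑ m ∈ Finset.range N, (geo q N (2 * m + 2) - 1) := by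
    refine Finset.sum_congr rfl fun m _ => ?_
    rw [oddPoch, Finset.prod_eq_one, mul_one]
    intro i _
    rw [pow_zero_of_le hq (by omega), sub_zero]
  have hs := Finset.sum_range_sub c N
  rw [Finset.sum_congr rfl fun k _ => hc k, hN] at hs
  rw [hs]
  exact (sub_sub_cancel _ _).symm

/-- Sum-of-tails form of the series in `second_step`, obtained by telescoping the series with
`(-q^{k+1}; q)_m` in place of `(-q; q)_m` from `k = 0` to `k = N`. -/
lemma tails_plus (hq : q ^ N = 0) :
    ∑ m ∈ Finset.range N, (geo q N (m + 1) - 1) * invPoch q N 0 (m + 1) =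
      ∑ m ∈ Finset.range N, (geo q N (m + 1) - 1)
        + ∑ k ∈ Finset.range N, (invPoch q N k (N + 1) - altGeo q N (k + 1)) := by
  let c (k : ℕ) : R := ∑ m ∈ Finset.range N, (geo q N (m + 1) - 1) * invPoch q N k (m + 1)
  have hc (k : ℕ) : c k - c (k + 1) = invPoch q N k (N + 1) - altGeo q N (k + 1) := by
    have h := Finset.sum_range_sub (fun m => invPoch q N k (m + 1)) N
    rw [show invPoch q N k (0 + 1) = altGeo q N (k + 1) by simp [invPoch]] at h
    rw [← h, ← Finset.sum_sub_distrib]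
    refine Finset.sum_congr rfl fun m _ => ?_
    have hg := one_sub_mul_geo hq (k := m + 1) (by omega)
    have h1 := one_add_mul_altGeo hq (k := k + 1) (by omega)
    have h2 := one_add_mul_altGeo hq (k := k + 1 + m + 1) (by omega)
    rw [invPoch_succ' k (m + 1), invPoch_succ' k m, invPoch_succ (k + 1) m]
    linear_combination invPoch q N (k + 1) m *
      (-q ^ (k + 1) * altGeo q N (k + 1) * altGeo q N (k + 1 + m + 1) * hg +
        (geo q N (m + 1) - 1) * (altGeo q N (k + 1 + m + 1) * h1 - altGeo q N (k + 1) * h2) -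
        altGeo q N (k + 1) * h2)
  have hN : c N = ∑ m ∈ Finset.range N, (geo q N (m + 1) - 1) := by
    refine Finset.sum_congr rfl fun m _ => ?_
    rw [invPoch, Finset.prod_eq_one, mul_one]
    intro i _
    have h := one_add_mul_altGeo hq (k := N + i + 1) (by omega)
    rwa [pow_zero_of_le hq (by omega), add_zero, one_mul] at h
  have hs := Finset.sum_range_sub' c N
  rw [Finset.sum_congr rfl fun k _ => hc k, hN] at hs
  rw [hs]
  exact (add_sub_cancel _ _).symm

lemma sum_range_two_mul (f : ℕ → R) (M : ℕ) :
    ∑ m ∈ Finset.range (2 * M), f m =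
      ∑ m ∈ Finset.range M, f (2 * m) + ∑ m ∈ Finset.range M, f (2 * m + 1) := by
  induction M with
  | zero => simp
  | succ M ih =>
    rw [show 2 * (M + 1) = 2 * M + 1 + 1 by ring, Finset.sum_range_succ, Finset.sum_range_succ, ih,
      Finset.sum_range_succ, Finset.sum_range_succ]
    ring

lemma lambert_split (hq : q ^ N = 0) :
    ∑ m ∈ Finset.range N, (geo q N (m + 1) - 1) =
      ∑ m ∈ Finset.range N, (geo q N (2 * m + 1) - 1) +
        ∑ m ∈ Finset.range N, (geo q N (2 * m + 2) - 1) := by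
  rw [← sum_range_two_mul (fun m => geo q N (m + 1) - 1), two_mul, Finset.sum_range_add,
    left_eq_add]
  refine Finset.sum_eq_zero fun m _ => ?_
  have h := one_sub_mul_geo hq (k := N + m + 1) (by omega)
  rw [pow_zero_of_le hq (by omega), sub_zero, one_mul] at h
  rw [h, sub_self]

/-- `∑ q^k / (1 + q^k) = Odd - Even`. -/
lemma sum_one_sub_altGeo (hq : q ^ N = 0) :
    ∑ k ∈ Finset.range N, (1 - altGeo q N (k + 1)) =
      ∑ m ∈ Finset.range N, (geo q N (2 * m + 1) - 1) -
        ∑ m ∈ Finset.range N, (geo q N (2 * m + 2) - 1) := by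
  have h : ∀ k ∈ Finset.range N, 1 - altGeo q N (k + 1) =
      (geo q N (k + 1) - 1) - 2 * (geo q N (2 * k + 2) - 1) := by
    intro m _
    have h2 := one_sub_mul_geo hq (k := 2 * m + 2) (by omega)
    have h1 := one_sub_mul_geo hq (k := m + 1) (by omega)
    have h0 := one_add_mul_altGeo hq (k := m + 1) (by omega)
    have h3 : geo q N (2 * m + 2) = geo q N (m + 1) * altGeo q N (m + 1) := by
      linear_combination (-geo q N (2 * m + 2)) * h1 -
        geo q N (2 * m + 2) * (1 - q ^ (m + 1)) * geo q N (m + 1) * h0 +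
        geo q N (m + 1) * altGeo q N (m + 1) * h2
    rw [h3]
    linear_combination altGeo q N (m + 1) * h1 + geo q N (m + 1) * h0
  rw [Finset.sum_congr rfl h, Finset.sum_sub_distrib, ← Finset.mul_sum, lambert_split hq]
  ring

/-! ### Gaussian binomials and the weighted Sylvester identity -/

/-- The Gaussian binomial coefficient `[n choose k]` in base `Q`, defined by
Pascal's rule. -/
def gaussBinom (Q : R) : ℕ → ℕ → R
  | _, 0 => 1
  | 0, _ + 1 => 0
  | n + 1, k + 1 => gaussBinom Q n k + Q ^ (k + 1) * gaussBinom Q n (k + 1)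

lemma gaussBinom_zero_right (Q : R) (n : ℕ) : gaussBinom Q n 0 = 1 := by
  cases n <;> rfl

lemma gaussBinom_succ_succ (Q : R) (n k : ℕ) :
    gaussBinom Q (n + 1) (k + 1) = gaussBinom Q n k + Q ^ (k + 1) * gaussBinom Q n (k + 1) := rfl

lemma gaussBinom_of_lt (Q : R) {n k : ℕ} (h : n < k) : gaussBinom Q n k = 0 := by
  induction n generalizing k with
  | zero => obtain ⟨k, rfl⟩ := Nat.exists_eq_add_of_lt h; simp [gaussBinom]
  | succ n ih =>
    obtain ⟨k, rfl⟩ : ∃ j, k = j + 1 := ⟨k - 1, by omega⟩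
    rw [gaussBinom_succ_succ, ih (by omega), ih (by omega), mul_zero, add_zero]

lemma gaussBinom_self (Q : R) (n : ℕ) : gaussBinom Q n n = 1 := by
  induction n with
  | zero => rfl
  | succ n ih => rw [gaussBinom_succ_succ, ih, gaussBinom_of_lt Q n.lt_succ_self, mul_zero, add_zero]

lemma gaussBinom_absorb (Q : R) (n k : ℕ) :
    (1 - Q ^ (k + 1)) * gaussBinom Q (n + 1) (k + 1) = (1 - Q ^ (n + 1)) * gaussBinom Q n k := by
  induction n generalizing k with
  | zero =>
    cases k with
    | zero => simp [gaussBinom]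
    | succ k => simp [gaussBinom]
  | succ n ih =>
    cases k with
    | zero =>
      have h1 := ih 0
      rw [gaussBinom_zero_right] at h1
      rw [gaussBinom_succ_succ, gaussBinom_zero_right]
      linear_combination Q * h1
    | succ k =>
      rw [gaussBinom_succ_succ Q (n + 1) (k + 1)]
      have h1 := ih (k + 1)
      have h2 := ih k
      have h3 := gaussBinom_succ_succ Q n k
      linear_combination Q ^ (k + 2) * h1 + Q * (1 - Q ^ (n + 1)) * (-1) * h3 + Q * h2

/-- Gauss' identity `∑ q^k [n choose k]_{q²} = (-q; q)_n`, from the three-term recurrence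
`H (n+2) = (1 + q) H (n+1) - q (1 - q^{2n+2}) H n` satisfied by both sides. -/
lemma sum_gaussBinom (q : R) (n : ℕ) :
    ∑ k ∈ Finset.range (n + 1), q ^ k * gaussBinom (q ^ 2) n k = plusPoch q n := by
  induction n using Nat.twoStepInduction with
  | zero => simp [gaussBinom, plusPoch]
  | one => simp [gaussBinom, plusPoch, Finset.sum_range_succ]
  | more n ih0 ih1 =>
    have key (k : ℕ) : gaussBinom (q ^ 2) (n + 2) (k + 1) = gaussBinom (q ^ 2) (n + 1) k +
        gaussBinom (q ^ 2) (n + 1) (k + 1) -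
        (1 - (q ^ 2) ^ (n + 1)) * gaussBinom (q ^ 2) n k := by
      rw [gaussBinom_succ_succ, ← gaussBinom_absorb]
      ring
    have e1 : ∑ k ∈ Finset.range (n + 2), q ^ (k + 1) * gaussBinom (q ^ 2) (n + 1) (k + 1) =
        plusPoch q (n + 1) - 1 := by
      rw [Finset.sum_range_succ, gaussBinom_of_lt _ (by omega), ← ih1,
        Finset.sum_range_succ' _ (n + 1), gaussBinom_zero_right]
      ring
    have e0 : ∑ k ∈ Finset.range (n + 2), q ^ k * gaussBinom (q ^ 2) n k = plusPoch q n := by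
      rw [Finset.sum_range_succ, gaussBinom_of_lt _ (by omega), ← ih0]
      ring
    rw [Finset.sum_range_succ', gaussBinom_zero_right]
    have e2 : ∑ k ∈ Finset.range (n + 2), q ^ (k + 1) * gaussBinom (q ^ 2) (n + 2) (k + 1) =
        q * plusPoch q (n + 1) + (plusPoch q (n + 1) - 1) -
          q * (1 - (q ^ 2) ^ (n + 1)) * plusPoch q n := by
      rw [← e1, ← e0, ← ih1, Finset.mul_sum, Finset.mul_sum, ← Finset.sum_add_distrib,
        ← Finset.sum_sub_distrib]
      refine Finset.sum_congr rfl fun k _ => ?_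
      rw [key]
      ring
    rw [e2, plusPoch_succ (n + 1), plusPoch_succ n]
    ring

/-- `∑ q^s [s+r choose r]_{q²} = 1 / (q; q²)_{r+1}`. -/
lemma sum_gaussBinom_diag (hq : q ^ N = 0) (r : ℕ) :
    ∑ s ∈ Finset.range N, q ^ s * gaussBinom (q ^ 2) (s + r) r = invOdd q N (r + 1) := by
  induction r with
  | zero => simp [gaussBinom_zero_right, invOdd, geo]
  | succ r ih =>
    set U := ∑ s ∈ Finset.range N, q ^ s * gaussBinom (q ^ 2) (s + (r + 1)) (r + 1) with hU
    have h : U = invOdd q N (r + 1) + q ^ (2 * (r + 1) + 1) * U := by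
      have h1 : ∑ s ∈ Finset.range (N + 1), q ^ s * gaussBinom (q ^ 2) (s + (r + 1)) (r + 1) = U := by
        rw [Finset.sum_range_succ, hq, zero_mul, add_zero]
      have h2 : ∑ s ∈ Finset.range (N + 1), q ^ s * gaussBinom (q ^ 2) (s + r) r =
          invOdd q N (r + 1) := by
        rw [Finset.sum_range_succ, hq, zero_mul, add_zero, ih]
      rw [Finset.sum_range_succ', zero_add, gaussBinom_self] at h1 h2
      rw [← h2]
      refine h1.symm.trans ?_
      rw [hU, Finset.mul_sum, add_right_comm, ← Finset.sum_add_distrib]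
      congr 1
      refine Finset.sum_congr rfl fun s _ => ?_
      rw [show s + 1 + (r + 1) = (s + 1 + r) + 1 by ring, gaussBinom_succ_succ,
        show s + 1 + r = s + (r + 1) by ring]
      ring
    have hg := one_sub_mul_geo hq (k := 2 * (r + 1) + 1) (by omega)
    rw [invOdd_succ (r + 1)]
    linear_combination geo q N (2 * (r + 1) + 1) * h - U * hg

/-- The `z`-derivative at `z = 1` of `∑ (zq)^s [s+r choose r]_{q²} = 1 / (zq; q²)_{r+1}`. -/
lemma sum_mul_gaussBinom_diag (hq : q ^ N = 0) (r : ℕ) :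
    ∑ s ∈ Finset.range N, (s : R) * (q ^ s * gaussBinom (q ^ 2) (s + r) r) =
      invOdd q N (r + 1) * ∑ i ∈ Finset.range (r + 1), (geo q N (2 * i + 1) - 1) := by
  induction r with
  | zero =>
    have h1 : ∑ s ∈ Finset.range (N + 1), (s : R) * q ^ s = ∑ s ∈ Finset.range N, (s : R) * q ^ s := by
      rw [Finset.sum_range_succ, hq, mul_zero, add_zero]
    rw [Finset.sum_range_succ'] at h1
    have hg := one_sub_mul_geo hq (k := 1) (by omega)
    have h2 : ∑ s ∈ Finset.range N, ((s + 1 : ℕ) : R) * q ^ (s + 1) =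
        q * ∑ s ∈ Finset.range N, (s : R) * q ^ s + q * geo q N 1 := by
      rw [geo, Finset.mul_sum, Finset.mul_sum, ← Finset.sum_add_distrib]
      refine Finset.sum_congr rfl fun s _ => ?_
      push_cast
      ring
    rw [h2] at h1
    simp only [gaussBinom_zero_right, invOdd, zero_add, Finset.sum_range_one, Finset.prod_range_one,
      mul_one, mul_zero]
    push_cast at h1
    linear_combination (-geo q N 1) * h1 - (∑ s ∈ Finset.range N, (s : R) * q ^ s) * hg -
      geo q N 1 * hg
  | succ r ih =>
    have hU := sum_gaussBinom_diag hq (r + 1)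
    set V := ∑ s ∈ Finset.range N, (s : R) * (q ^ s * gaussBinom (q ^ 2) (s + (r + 1)) (r + 1))
      with hV
    have h : V = invOdd q N (r + 1) * ∑ i ∈ Finset.range (r + 1), (geo q N (2 * i + 1) - 1) +
        q ^ (2 * (r + 1) + 1) * (V + invOdd q N (r + 2)) := by
      have h1 : ∑ s ∈ Finset.range (N + 1),
          (s : R) * (q ^ s * gaussBinom (q ^ 2) (s + (r + 1)) (r + 1)) = V := by
        rw [Finset.sum_range_succ, hq, zero_mul, mul_zero, add_zero]
      have h2 : ∑ s ∈ Finset.range (N + 1), (s : R) * (q ^ s * gaussBinom (q ^ 2) (s + r) r) =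
          invOdd q N (r + 1) * ∑ i ∈ Finset.range (r + 1), (geo q N (2 * i + 1) - 1) := by
        rw [Finset.sum_range_succ, hq, zero_mul, mul_zero, add_zero, ih]
      rw [Finset.sum_range_succ', Nat.cast_zero, zero_mul, add_zero] at h1 h2
      rw [← h2]
      refine h1.symm.trans ?_
      rw [hV, ← hU, mul_add, Finset.mul_sum, Finset.mul_sum,
        ← Finset.sum_add_distrib, ← Finset.sum_add_distrib]
      refine Finset.sum_congr rfl fun s _ => ?_
      rw [show s + 1 + (r + 1) = (s + 1 + r) + 1 by ring, gaussBinom_succ_succ,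
        show s + 1 + r = s + (r + 1) by ring]
      push_cast
      ring
    have hg := one_sub_mul_geo hq (k := 2 * (r + 1) + 1) (by omega)
    rw [invOdd_succ (r + 1)] at h
    rw [invOdd_succ (r + 1), Finset.sum_range_succ _ (r + 1)]
    linear_combination geo q N (2 * (r + 1) + 1) * h - V * hg -
      invOdd q N (r + 1) * geo q N (2 * (r + 1) + 1) * hg

/-- The left side is the generating function for the sum of the largest parts over partitions
into distinct parts; the right side is that of the sum of `(L - 1) / 2 + ℓ` over partitions into
odd parts with largest part `L` and `ℓ` parts. Both equal
`∑_{r,s} (r + s + 1) q^{2r+s+1} [r+s choose r]_{q²}`. -/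
lemma sylvester_weighted (hq : q ^ N = 0) :
    ∑ M ∈ Finset.range N, ((M : R) + 1) * (q ^ (M + 1) * plusPoch q M) =
      ∑ r ∈ Finset.range N, q ^ (2 * r + 1) * invOdd q N (r + 1) *
        (r + 1 + ∑ i ∈ Finset.range (r + 1), (geo q N (2 * i + 1) - 1)) := by
  let t (r s : ℕ) : R := ((r + s : ℕ) + 1 : R) * (q ^ (2 * r + s + 1) * gaussBinom (q ^ 2) (s + r) r)
  have hR : ∀ r ∈ Finset.range N, q ^ (2 * r + 1) * invOdd q N (r + 1) *
        (r + 1 + ∑ i ∈ Finset.range (r + 1), (geo q N (2 * i + 1) - 1)) =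
      ∑ s ∈ Finset.range N, t r s := by
    intro r _
    rw [mul_add, mul_assoc _ _ (∑ i ∈ _, _), ← sum_mul_gaussBinom_diag hq,
      ← sum_gaussBinom_diag hq, Finset.mul_sum, Finset.sum_mul, Finset.mul_sum,
      ← Finset.sum_add_distrib]
    refine Finset.sum_congr rfl fun s _ => ?_
    simp only [t]
    push_cast
    ring
  have hL : ∀ M ∈ Finset.range N, ((M : R) + 1) * (q ^ (M + 1) * plusPoch q M) =
      ∑ x ∈ Finset.HasAntidiagonal.antidiagonal M, t x.1 x.2 := by
    intro M _
    rw [← sum_gaussBinom, Finset.mul_sum, Finset.mul_sum,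
      Finset.Nat.sum_antidiagonal_eq_sum_range_succ t]
    refine Finset.sum_congr rfl fun r hr => ?_
    have hr : r ≤ M := Nat.lt_succ_iff.mp (Finset.mem_range.mp hr)
    simp only [t]
    rw [Nat.add_sub_cancel' hr, Nat.sub_add_cancel hr,
      show 2 * r + (M - r) + 1 = M + 1 + r by omega]
    ring
  rw [Finset.sum_congr rfl hR, Finset.sum_congr rfl hL, ← Finset.sum_product', Finset.sum_sigma']
  refine Finset.sum_bij_ne_zero (fun x _ _ => x.2) ?_ ?_ ?_ ?_
  · rintro ⟨M, r, s⟩ h _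
    simp only [Finset.mem_sigma, Finset.mem_range, Finset.HasAntidiagonal.mem_antidiagonal, Finset.mem_product]
      at h ⊢
    omega
  · rintro ⟨M, r, s⟩ h _ ⟨M', r', s'⟩ h' _ e
    simp only [Finset.mem_sigma, Finset.mem_range, Finset.HasAntidiagonal.mem_antidiagonal] at h h'
    simp only [Prod.mk.injEq] at e
    obtain ⟨rfl, rfl⟩ := e
    obtain rfl : M = M' := by omega
    rfl
  · rintro ⟨r, s⟩ _ h0
    refine ⟨⟨r + s, r, s⟩, ?_, h0, rfl⟩
    simp only [Finset.mem_sigma, Finset.mem_range, Finset.HasAntidiagonal.mem_antidiagonal, and_true]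
    by_contra hlt
    apply h0
    simp only [t]
    rw [pow_zero_of_le hq (by omega), zero_mul, mul_zero]
  · intros; rfl

/-- Abel summation of the tails `a n - a k`. -/
lemma sum_sub_eq (a : ℕ → R) (n : ℕ) :
    ∑ k ∈ Finset.range n, (a n - a k) = ∑ k ∈ Finset.range n, ((k : R) + 1) * (a (k + 1) - a k) := by
  induction n with
  | zero => simp
  | succ n ih =>
    rw [Finset.sum_range_succ, Finset.sum_range_succ, ← ih]
    have : ∑ k ∈ Finset.range n, (a (n + 1) - a k) =
        ∑ k ∈ Finset.range n, (a n - a k) + n * (a (n + 1) - a n) := by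
      simp only [Finset.sum_sub_distrib, Finset.sum_const, Finset.card_range, nsmul_eq_mul]
      ring
    rw [this]
    ring

/-- Comparison of the two sums of tails, deduced from `sylvester_weighted` after multiplication
by the unit `(-q; q)_∞ = 1 / (q; q²)_∞`. -/
lemma tails_compare (hq : q ^ N = 0) :
    ∑ m ∈ Finset.range N, (geo q N (2 * m + 1) - 1) +
        ∑ k ∈ Finset.range N, (invPoch q N k (N + 1) - 1) =
      ∑ k ∈ Finset.range N, (oddPoch q (k + 1) N - 1) := by
  have hA := plusPoch_eq_invOdd hq
  have hunit := oddPoch_mul_invOdd hq N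
  have h1 : plusPoch q N * ∑ k ∈ Finset.range N, (invPoch q N k (N + 1) - 1) =
      - ∑ M ∈ Finset.range N, ((M : R) + 1) * (q ^ (M + 1) * plusPoch q M) := by
    have e := sum_sub_eq (plusPoch q) N
    have e' : ∀ k, plusPoch q (k + 1) - plusPoch q k = q ^ (k + 1) * plusPoch q k := by
      intro k; rw [plusPoch_succ]; ring
    simp only [e'] at e
    rw [← e, Finset.mul_sum, ← Finset.sum_neg_distrib]
    refine Finset.sum_congr rfl fun k _ => ?_
    have h := plusPoch_add_mul_invPoch hq k (N + 1)
    rw [show k + (N + 1) = N + (k + 1) by ring, plusPoch_of_le hq] at h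
    rw [← h]; ring
  have hstep (r : ℕ) : invOdd q N (r + 1) - invOdd q N r = q ^ (2 * r + 1) * invOdd q N (r + 1) := by
    have hg := one_sub_mul_geo hq (k := 2 * r + 1) (by omega)
    rw [invOdd_succ]
    linear_combination invOdd q N r * hg
  have h2 : invOdd q N N * ∑ k ∈ Finset.range N, (oddPoch q (k + 1) N - 1) =
      - ∑ r ∈ Finset.range N, q ^ (2 * r + 1) * invOdd q N (r + 1) * (r : R) := by
    have e := sum_sub_eq (invOdd q N) N
    simp only [hstep] at e
    have e2 := Finset.sum_range_sub (invOdd q N) N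
    simp only [hstep] at e2
    have e3 : ∑ k ∈ Finset.range N, (invOdd q N N - invOdd q N (k + 1)) =
        ∑ k ∈ Finset.range N, (invOdd q N N - invOdd q N k) -
          ∑ r ∈ Finset.range N, q ^ (2 * r + 1) * invOdd q N (r + 1) := by
      rw [← Finset.sum_sub_distrib]
      refine Finset.sum_congr rfl fun k _ => ?_
      rw [← hstep]; ring
    have e4 : ∑ r ∈ Finset.range N, q ^ (2 * r + 1) * invOdd q N (r + 1) * (r : R) =
        ∑ k ∈ Finset.range N, (invOdd q N N - invOdd q N (k + 1)) := by
      rw [e3, e, ← Finset.sum_sub_distrib]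
      exact Finset.sum_congr rfl fun k _ => by ring
    rw [e4, Finset.mul_sum, ← Finset.sum_neg_distrib]
    refine Finset.sum_congr rfl fun k _ => ?_
    have h := invOdd_add_mul_oddPoch hq (k + 1) N
    rw [show k + 1 + N = N + (k + 1) by ring, invOdd_of_le hq] at h
    rw [← h]; ring
  have h3 : invOdd q N N * ∑ m ∈ Finset.range N, (geo q N (2 * m + 1) - 1) =
      ∑ r ∈ Finset.range N, q ^ (2 * r + 1) * invOdd q N (r + 1) *
        (1 + ∑ i ∈ Finset.range (r + 1), (geo q N (2 * i + 1) - 1)) := by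
    have e := Finset.sum_range_sub
      (fun r => invOdd q N r * ∑ m ∈ Finset.range r, (geo q N (2 * m + 1) - 1)) N
    simp only [Finset.range_zero, Finset.sum_empty, mul_zero, sub_zero] at e
    rw [← e]
    refine Finset.sum_congr rfl fun r _ => ?_
    have hg := one_sub_mul_geo hq (k := 2 * r + 1) (by omega)
    rw [Finset.sum_range_succ, invOdd_succ]
    linear_combination (invOdd q N r * (∑ m ∈ Finset.range r, (geo q N (2 * m + 1) - 1)) +
      invOdd q N r * geo q N (2 * r + 1)) * hg
  have h4 := sylvester_weighted hq
  have h5 : ∑ r ∈ Finset.range N, q ^ (2 * r + 1) * invOdd q N (r + 1) *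
        (r + 1 + ∑ i ∈ Finset.range (r + 1), (geo q N (2 * i + 1) - 1)) =
      ∑ r ∈ Finset.range N, q ^ (2 * r + 1) * invOdd q N (r + 1) * (r : R) +
      ∑ r ∈ Finset.range N, q ^ (2 * r + 1) * invOdd q N (r + 1) *
        (1 + ∑ i ∈ Finset.range (r + 1), (geo q N (2 * i + 1) - 1)) := by
    rw [← Finset.sum_add_distrib]
    exact Finset.sum_congr rfl fun r _ => by ring
  rw [hA] at h1
  generalize ∑ m ∈ Finset.range N, (geo q N (2 * m + 1) - 1) = a at *
  generalize ∑ k ∈ Finset.range N, (invPoch q N k (N + 1) - 1) = b at *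
  generalize ∑ k ∈ Finset.range N, (oddPoch q (k + 1) N - 1) = c at *
  have h6 : invOdd q N N * (a + b - c) = 0 := by
    linear_combination h3 + h1 - h2 - h4 - h5
  linear_combination oddPoch q 0 N * h6 - (a + b - c) * hunit

/-- `(q - 1) P₁ = q (P₂ + Even - Odd)`. -/
theorem series_identity (hq : q ^ N = 0) :
    (q - 1) * ∑ m ∈ Finset.range N, (geo q N (2 * m + 2) - 1) * oddPoch q 0 m =
      q * (∑ m ∈ Finset.range N, (geo q N (2 * m + 2) - 1) * invPoch q N 0 m +
        ∑ m ∈ Finset.range N, (geo q N (2 * m + 2) - 1) -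
        ∑ m ∈ Finset.range N, (geo q N (2 * m + 1) - 1)) := by
  have hinv : invPoch q N 0 N = oddPoch q 0 N := by
    have h1 := plusPoch_add_mul_invPoch hq 0 N
    rw [zero_add, show plusPoch q 0 = 1 by simp [plusPoch], plusPoch_eq_invOdd hq] at h1
    have h2 := oddPoch_mul_invOdd hq N
    linear_combination oddPoch q 0 N * h1 - invPoch q N 0 N * h2
  have h1 : ∑ k ∈ Finset.range N, (invPoch q N k (N + 1) - altGeo q N (k + 1)) =
      ∑ k ∈ Finset.range N, (invPoch q N k (N + 1) - 1) +
        ∑ k ∈ Finset.range N, (1 - altGeo q N (k + 1)) := by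
    rw [← Finset.sum_add_distrib]
    exact Finset.sum_congr rfl fun k _ => by ring
  have h2 : ∑ k ∈ Finset.range N, (1 - oddPoch q (k + 1) N) =
      - ∑ k ∈ Finset.range N, (oddPoch q (k + 1) N - 1) := by
    rw [← Finset.sum_neg_distrib]
    exact Finset.sum_congr rfl fun k _ => by ring
  rw [first_step hq, second_step hq, tails_odd hq, tails_plus hq, h1, h2, sum_one_sub_altGeo hq,
    lambert_split hq, hinv, ← tails_compare hq]
  ring

end Ring

/-! ### Generating functions of the weighted partition counts -/

section Partitions
open PowerSeries
open scoped PowerSeries.WithPiTopology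

lemma sup_mem_of_pos (s : Multiset ℕ) (h : 0 < s.sup) : s.sup ∈ s := by
  induction s using Multiset.induction_on with
  | empty => simp at h
  | cons a s ih =>
    rw [Multiset.sup_cons] at h ⊢
    rcases le_total s.sup a with h1 | h1
    · rw [sup_eq_left.mpr h1]; exact Multiset.mem_cons_self _ _
    · rw [sup_eq_right.mpr h1] at h ⊢
      exact Multiset.mem_cons_of_mem (ih h)

lemma count_le {n : ℕ} (p : n.Partition) (i : ℕ) : p.parts.count i ≤ n := by
  have h := Multiset.card_nsmul_le_sum (s := p.parts) (a := 1) fun x hx => p.parts_pos hx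
  rw [p.parts_sum, smul_eq_mul, mul_one] at h
  exact (Multiset.count_le_card _ _).trans h

/-- The weight of a part `i` of multiplicity `c` that allows only parts at most `M`: a part
`i < M` has weight `u i c`, the part `M` has weight `a`. Multiplicities `N` and above get weight
`0`; they do not occur in partitions of integers below `N`, and cutting them off makes the factors
of the generating function polynomials. -/
def cutChar (M N : ℕ) (a : ℤ) (u : ℕ → ℕ → ℤ) (i c : ℕ) : ℤ :=
  if c < N then (if i < M then u i c else if i = M then a else 0) else 0

lemma genFun_cutChar (M N : ℕ) (a : ℤ) (u : ℕ → ℕ → ℤ) :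
    Nat.Partition.genFun (cutChar (M + 1) (N + 1) a u) =
      (∏ i ∈ Finset.range M,
        (1 + ∑ j ∈ Finset.range N, C (u (i + 1) (j + 1)) * (X : ℤ⟦X⟧) ^ ((i + 1) * (j + 1)))) *
      (1 + ∑ j ∈ Finset.range N, C a * (X : ℤ⟦X⟧) ^ ((M + 1) * (j + 1))) := by
  rw [Nat.Partition.genFun_eq_tprod]
  have hsum (i : ℕ) : ∑' j, C (cutChar (M + 1) (N + 1) a u (i + 1) (j + 1)) *
      (X : ℤ⟦X⟧) ^ ((i + 1) * (j + 1)) = ∑ j ∈ Finset.range N,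
        C (cutChar (M + 1) (N + 1) a u (i + 1) (j + 1)) * (X : ℤ⟦X⟧) ^ ((i + 1) * (j + 1)) := by
    refine tsum_eq_sum fun j hj => ?_
    rw [Finset.mem_range] at hj
    rw [cutChar, if_neg (by omega), map_zero, zero_mul]
  simp only [smul_eq_C_mul, hsum]
  rw [tprod_eq_prod (s := Finset.range (M + 1)), Finset.prod_range_succ]
  · congr 1
    · refine Finset.prod_congr rfl fun i hi => ?_
      rw [Finset.mem_range] at hi
      congr 1
      refine Finset.sum_congr rfl fun j hj => ?_
      rw [Finset.mem_range] at hj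
      rw [cutChar, if_pos (by omega), if_pos (by omega)]
    · congr 1
      refine Finset.sum_congr rfl fun j hj => ?_
      rw [Finset.mem_range] at hj
      rw [cutChar, if_pos (by omega), if_neg (by omega), if_pos rfl]
  · intro i hi
    rw [Finset.mem_range] at hi
    rw [Finset.sum_eq_zero, add_zero]
    intro j hj
    rw [Finset.mem_range] at hj
    rw [cutChar, if_pos (by omega), if_neg (by omega), if_neg (by omega), map_zero, zero_mul]

/-- Allowing the part `M` with weight `1`, minus forbidding it, selects the partitions with
largest part exactly `M`. -/
lemma prod_cutChar_sub {n M N : ℕ} (hM : 1 ≤ M) (hn : n < N) (u : ℕ → ℕ → ℤ) (p : n.Partition) :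
    p.parts.toFinsupp.prod (cutChar M N 1 u) - p.parts.toFinsupp.prod (cutChar M N 0 u) =
      if p.parts.sup = M then ∏ i ∈ p.parts.toFinset.erase M, u i (p.parts.count i) else 0 := by
  simp only [Finsupp.prod, Multiset.toFinsupp_support, Multiset.toFinsupp_apply]
  have hc (i : ℕ) : p.parts.count i < N := (count_le p i).trans_lt hn
  by_cases hmem : M ∈ p.parts
  · have hmem' : M ∈ p.parts.toFinset := Multiset.mem_toFinset.mpr hmem
    rw [← Finset.mul_prod_erase _ _ hmem', ← Finset.mul_prod_erase _ (fun i => cutChar M N 0 u i _) hmem']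
    have h1 : cutChar M N 1 u M (p.parts.count M) = 1 := by simp [cutChar, hc]
    have h0 : cutChar M N 0 u M (p.parts.count M) = 0 := by simp [cutChar]
    rw [h1, h0, one_mul, zero_mul, sub_zero]
    split_ifs with hs
    · refine Finset.prod_congr rfl fun i hi => ?_
      rw [Finset.mem_erase, Multiset.mem_toFinset] at hi
      have : i ≤ M := hs ▸ Multiset.le_sup hi.2
      rw [cutChar, if_pos (hc i), if_pos (by omega)]
    · have hlt : M < p.parts.sup := lt_of_le_of_ne (Multiset.le_sup hmem) (Ne.symm hs)
      refine Finset.prod_eq_zero (i := p.parts.sup) ?_ ?_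
      · rw [Finset.mem_erase, Multiset.mem_toFinset]
        exact ⟨hs, sup_mem_of_pos _ (by omega)⟩
      · rw [cutChar, if_pos (hc _), if_neg (by omega), if_neg hs]
  · rw [if_neg, sub_eq_zero]
    · refine Finset.prod_congr rfl fun i hi => ?_
      have : i ≠ M := fun h => hmem (h ▸ Multiset.mem_toFinset.mp hi)
      simp [cutChar, this]
    · intro h
      exact hmem (h ▸ sup_mem_of_pos _ (by omega))

lemma geo_eq (q : ℤ⟦X⟧) (N k : ℕ) :
    geo q (N + 1) k = 1 + ∑ j ∈ Finset.range N, q ^ (k * (j + 1)) := by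
  rw [geo, Finset.sum_range_succ', pow_zero, add_comm]
  simp only [pow_mul]

lemma altGeo_eq (N k : ℕ) :
    altGeo (X : ℤ⟦X⟧) (N + 1) k =
      1 + ∑ j ∈ Finset.range N, C ((-1 : ℤ) ^ (j + 1)) * (X : ℤ⟦X⟧) ^ (k * (j + 1)) := by
  rw [altGeo, Finset.sum_range_succ', pow_zero, add_comm]
  congr 1
  refine Finset.sum_congr rfl fun j _ => ?_
  rw [neg_pow, pow_mul, map_pow, map_neg, map_one]

/-- Generating function of the partitions with largest part `M + 1`, where each smaller part `i`
of multiplicity `c` contributes the factor `u i c`. -/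
lemma sum_sup_eq {n N : ℕ} (M : ℕ) (hn : n < N + 1) (u : ℕ → ℕ → ℤ) :
    ∑ p : n.Partition, (if p.parts.sup = M + 1 then
        ∏ i ∈ p.parts.toFinset.erase (M + 1), u i (p.parts.count i) else 0) =
      coeff n ((geo X (N + 1) (M + 1) - 1) * ∏ i ∈ Finset.range M,
        (1 + ∑ j ∈ Finset.range N, C (u (i + 1) (j + 1)) * (X : ℤ⟦X⟧) ^ ((i + 1) * (j + 1)))) := by
  have h : (geo X (N + 1) (M + 1) - 1) * ∏ i ∈ Finset.range M,
        (1 + ∑ j ∈ Finset.range N, C (u (i + 1) (j + 1)) * (X : ℤ⟦X⟧) ^ ((i + 1) * (j + 1))) =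
      Nat.Partition.genFun (cutChar (M + 1) (N + 1) 1 u) -
        Nat.Partition.genFun (cutChar (M + 1) (N + 1) 0 u) := by
    rw [genFun_cutChar, genFun_cutChar, geo_eq]
    simp only [map_one, one_mul, map_zero, zero_mul, Finset.sum_const_zero]
    ring
  rw [h, map_sub, Nat.Partition.coeff_genFun, Nat.Partition.coeff_genFun, ← Finset.sum_sub_distrib]
  exact Finset.sum_congr rfl fun p _ => (prod_cutChar_sub (by omega) hn u p).symm

lemma prod_range_two_mul (f : ℕ → ℤ⟦X⟧) (M : ℕ) :
    ∏ m ∈ Finset.range (2 * M), f m =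
      (∏ m ∈ Finset.range M, f (2 * m)) * ∏ m ∈ Finset.range M, f (2 * m + 1) := by
  induction M with
  | zero => simp
  | succ M ih =>
    rw [show 2 * (M + 1) = 2 * M + 1 + 1 by ring, Finset.prod_range_succ, Finset.prod_range_succ, ih,
      Finset.prod_range_succ, Finset.prod_range_succ]
    ring

/-- Splitting according to an even value `2m + 2` of the largest part. -/
lemma sum_even_sup {n N : ℕ} (hn : 1 ≤ n) (hN : n < N) (p : n.Partition) (F : ℕ → ℤ) :
    (∑ m ∈ Finset.range N, if p.parts.sup = 2 * m + 2 then F (2 * m + 2) else 0) =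
      if Even p.parts.sup then F p.parts.sup else 0 := by
  have hpos : 0 < p.parts.sup := by
    by_contra h
    have h0 : p.parts = 0 := by
      refine Multiset.eq_zero_of_forall_notMem fun x hx => ?_
      have := p.parts_pos hx
      have := Multiset.le_sup hx
      omega
    have := p.parts_sum
    rw [h0, Multiset.sum_zero] at this
    omega
  have hle : p.parts.sup ≤ n := by
    have := Multiset.le_sum_of_mem (sup_mem_of_pos _ hpos)
    rwa [p.parts_sum] at this
  split_ifs with he
  · obtain ⟨k, hk⟩ := he
    rw [Finset.sum_eq_single (k - 1)]
    · have : 2 * (k - 1) + 2 = p.parts.sup := by omega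
      rw [this, if_pos rfl]
    · intro m _ hm
      rw [if_neg (by omega)]
    · intro h
      exact absurd (Finset.mem_range.mpr (by omega)) h
  · refine Finset.sum_eq_zero fun m _ => if_neg fun h => he ?_
    rw [h]
    exact ⟨m + 1, by ring⟩

lemma p1_weight {n : ℕ} (p : n.Partition) (he : Even p.parts.sup) :
    (∏ i ∈ p.parts.toFinset.erase p.parts.sup,
      if Odd i ∧ p.parts.count i = 1 ∧ i ≠ p.parts.sup - 1 then (-1 : ℤ) else 0) =
    if P1Cond p then (-1 : ℤ) ^ (Multiset.card (p.parts.filter fun p => Odd p)) else 0 := by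
  have hiff : (∀ i ∈ p.parts.toFinset.erase p.parts.sup,
      Odd i ∧ p.parts.count i = 1 ∧ i ≠ p.parts.sup - 1) ↔ P1Cond p := by
    simp only [Finset.mem_erase, Multiset.mem_toFinset, P1Cond, he, true_and]
    constructor
    · intro h i hi hlt
      exact h i ⟨hlt.ne, hi⟩
    · rintro h i ⟨hne, hi⟩
      exact h i hi (lt_of_le_of_ne (Multiset.le_sup hi) hne)
  rw [Finset.prod_ite_zero]
  by_cases hP : P1Cond p
  · rw [if_pos hP, if_pos (hiff.mpr hP), Finset.prod_const]
    congr 1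
    have hall := hiff.mpr hP
    have hset : p.parts.toFinset.erase p.parts.sup = (p.parts.filter fun p => Odd p).toFinset := by
      ext i
      rw [Multiset.mem_toFinset, Multiset.mem_filter]
      constructor
      · intro hi
        exact ⟨Multiset.mem_toFinset.mp (Finset.mem_of_mem_erase hi), (hall i hi).1⟩
      · rintro ⟨hi, ho⟩
        refine Finset.mem_erase.mpr ⟨?_, Multiset.mem_toFinset.mpr hi⟩
        rintro rfl
        exact (Nat.not_even_iff_odd.mpr ho) he
    rw [hset]
    refine Multiset.toFinset_card_of_nodup (Multiset.nodup_iff_count_le_one.mpr fun i => ?_)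
    by_cases hi : i ∈ p.parts.filter fun p => Odd p
    · have h1 := hall i (by rw [hset]; exact Multiset.mem_toFinset.mpr hi)
      exact (Multiset.count_le_of_le i (Multiset.filter_le _ _)).trans h1.2.1.le
    · rw [Multiset.count_eq_zero_of_notMem hi]
      omega
  · rw [if_neg hP, if_neg (fun h => hP (hiff.mp h))]

lemma p2_weight {n : ℕ} (p : n.Partition) (he : Even p.parts.sup) :
    (∏ i ∈ p.parts.toFinset.erase p.parts.sup,
      if i < p.parts.sup / 2 then (-1 : ℤ) ^ p.parts.count i else 0) =
    if P2Cond p then (-1 : ℤ) ^ (Multiset.card p.parts - p.parts.count p.parts.sup) else 0 := by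
  have hiff : (∀ i ∈ p.parts.toFinset.erase p.parts.sup, i < p.parts.sup / 2) ↔ P2Cond p := by
    simp only [Finset.mem_erase, Multiset.mem_toFinset, P2Cond, he, true_and]
    constructor
    · intro h i hi hlt
      have h0 := p.parts_pos hi
      have := h i ⟨by omega, hi⟩
      omega
    · rintro h i ⟨hne, hi⟩
      have := h i hi
      have := Multiset.le_sup hi
      omega
  rw [Finset.prod_ite_zero, Finset.prod_pow_eq_pow_sum]
  have hsum : ∑ i ∈ p.parts.toFinset.erase p.parts.sup, p.parts.count i =
      Multiset.card p.parts - p.parts.count p.parts.sup := by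
    rw [← Multiset.toFinset_sum_count_eq]
    by_cases hmem : p.parts.sup ∈ p.parts.toFinset
    · rw [← Finset.add_sum_erase _ _ hmem, Nat.add_sub_cancel_left]
    · rw [Finset.erase_eq_of_notMem hmem, Multiset.count_eq_zero_of_notMem
        (fun h => hmem (Multiset.mem_toFinset.mpr h)), Nat.sub_zero]
  rw [hsum]
  by_cases hP : P2Cond p
  · rw [if_pos hP, if_pos (hiff.mpr hP)]
  · rw [if_neg hP, if_neg (fun h => hP (hiff.mp h))]

lemma p1_eq_coeff {n N : ℕ} (hn : 1 ≤ n) (hN : n < N) :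
    p1 n = coeff n (∑ m ∈ Finset.range N, (geo X N (2 * m + 2) - 1) * oddPoch (X : ℤ⟦X⟧) 0 m) := by
  obtain ⟨N, rfl⟩ : ∃ K, N = K + 1 := ⟨N - 1, by omega⟩
  let u (M i c : ℕ) : ℤ := if Odd i ∧ c = 1 ∧ i ≠ M - 1 then -1 else 0
  have hu (m : ℕ) : ∏ i ∈ Finset.range (2 * m + 1), (1 + ∑ j ∈ Finset.range N,
      C (u (2 * m + 2) (i + 1) (j + 1)) * (X : ℤ⟦X⟧) ^ ((i + 1) * (j + 1))) = oddPoch X 0 m := by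
    have hf (i : ℕ) : (1 + ∑ j ∈ Finset.range N,
        C (u (2 * m + 2) (i + 1) (j + 1)) * (X : ℤ⟦X⟧) ^ ((i + 1) * (j + 1))) =
        if Even i ∧ i ≠ 2 * m then 1 - X ^ (i + 1) else 1 := by
      -- only multiplicity one, that is `j = 0`, has nonzero weight
      rw [Finset.sum_eq_single 0]
      · have : (Odd (i + 1) ∧ True ∧ i + 1 ≠ 2 * m + 2 - 1) ↔ (Even i ∧ i ≠ 2 * m) := by
          rw [Nat.odd_add_one, Nat.not_odd_iff_even]
          refine and_congr_right fun _ => ?_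
          rw [true_and]
          omega
        simp only [u]
        rw [if_congr this rfl rfl]
        split_ifs <;> simp [sub_eq_add_neg]
      · intro j _ hj
        simp [u, hj]
      · intro h
        rw [Finset.mem_range] at h
        omega
    rw [Finset.prod_congr rfl fun i _ => hf i, Finset.prod_range_succ, prod_range_two_mul,
      if_neg (by simp), mul_one, oddPoch, Finset.prod_eq_one (s := Finset.range m)
        (f := fun i => ite (Even (2 * i + 1) ∧ _) _ _), mul_one]
    · refine Finset.prod_congr rfl fun i hi => ?_
      rw [Finset.mem_range] at hi
      rw [if_pos ⟨even_two_mul i, by omega⟩, zero_add]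
    · intro i _
      rw [if_neg]
      simp
  rw [map_sum]
  have h (m : ℕ) := sum_sup_eq (2 * m + 1) hN (u (2 * m + 2))
  simp only [hu] at h
  simp only [show ∀ m, 2 * m + 1 + 1 = 2 * m + 2 from fun _ => rfl] at h
  rw [← Finset.sum_congr rfl fun m _ => h m, Finset.sum_comm, p1]
  refine Finset.sum_congr rfl fun p _ => ?_
  rw [sum_even_sup hn hN p
    (fun M => ∏ i ∈ p.parts.toFinset.erase M, u M i (p.parts.count i))]
  split_ifs with hP he he
  · rw [p1_weight p he, if_pos hP]
  · exact absurd hP.1 he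
  · rw [p1_weight p he, if_neg hP]
  · rfl

lemma p2_eq_coeff {n N : ℕ} (hn : 1 ≤ n) (hN : n < N) :
    p2 n = coeff n (∑ m ∈ Finset.range N,
      (geo X N (2 * m + 2) - 1) * invPoch (X : ℤ⟦X⟧) N 0 m) := by
  obtain ⟨N, rfl⟩ : ∃ K, N = K + 1 := ⟨N - 1, by omega⟩
  let u (M i c : ℕ) : ℤ := if i < M / 2 then (-1) ^ c else 0
  have hu (m : ℕ) : ∏ i ∈ Finset.range (2 * m + 1), (1 + ∑ j ∈ Finset.range N,
      C (u (2 * m + 2) (i + 1) (j + 1)) * (X : ℤ⟦X⟧) ^ ((i + 1) * (j + 1))) =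
      invPoch X (N + 1) 0 m := by
    rw [show 2 * m + 1 = m + (m + 1) by ring, Finset.prod_range_add, invPoch]
    rw [Finset.prod_eq_one (s := Finset.range (m + 1)), mul_one]
    · refine Finset.prod_congr rfl fun i hi => ?_
      rw [Finset.mem_range] at hi
      rw [altGeo_eq, zero_add]
      congr 1
      refine Finset.sum_congr rfl fun j _ => ?_
      simp only [u]
      rw [if_pos (by omega)]
    · intro i _
      rw [Finset.sum_eq_zero, add_zero]
      intro j _
      simp only [u]
      rw [if_neg (by omega), map_zero, zero_mul]
  rw [map_sum]
  have h (m : ℕ) := sum_sup_eq (2 * m + 1) hN (u (2 * m + 2))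
  simp only [hu] at h
  simp only [show ∀ m, 2 * m + 1 + 1 = 2 * m + 2 from fun _ => rfl] at h
  rw [← Finset.sum_congr rfl fun m _ => h m, Finset.sum_comm, p2]
  refine Finset.sum_congr rfl fun p _ => ?_
  rw [sum_even_sup hn hN p
    (fun M => ∏ i ∈ p.parts.toFinset.erase M, u M i (p.parts.count i))]
  split_ifs with hP he he
  · rw [p2_weight p he, if_pos hP]
  · exact absurd hP.1 he
  · rw [p2_weight p he, if_neg hP]
  · rfl

lemma coeff_geo_sub_one {n N k : ℕ} (hn : 1 ≤ n) (hN : n < N) (hk : 1 ≤ k) :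
    coeff n (geo (X : ℤ⟦X⟧) N k - 1) = if k ∣ n then 1 else 0 := by
  rw [map_sub, coeff_one, if_neg (by omega), sub_zero, geo, map_sum]
  simp only [← pow_mul, coeff_X_pow]
  split_ifs with h
  · obtain ⟨j, rfl⟩ := h
    rw [Finset.sum_eq_single j]
    · simp
    · intro b _ hb
      rw [if_neg]
      intro h
      exact hb (Nat.eq_of_mul_eq_mul_left hk h).symm
    · intro hj
      have := Nat.le_mul_of_pos_left j hk
      exact absurd (Finset.mem_range.mpr (by omega)) hj
  · exact Finset.sum_eq_zero fun j _ => if_neg fun e => h ⟨j, e⟩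

lemma tauE_eq_coeff {n N : ℕ} (hn : 1 ≤ n) (hN : n < N) :
    tauE n = coeff n (∑ m ∈ Finset.range N, (geo (X : ℤ⟦X⟧) N (2 * m + 2) - 1)) := by
  rw [map_sum, Finset.sum_congr rfl fun m _ => coeff_geo_sub_one hn hN (k := 2 * m + 2) (by omega),
    Finset.sum_boole, tauE]
  congr 1
  symm
  refine Finset.card_bij (fun m _ => 2 * m + 2) ?_ ?_ ?_
  · intro m hm
    rw [Finset.mem_filter] at hm
    rw [Finset.mem_filter, Nat.mem_divisors]
    exact ⟨⟨hm.2, by omega⟩, ⟨m + 1, by ring⟩⟩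
  · intro a _ b _ h
    omega
  · intro d hd
    rw [Finset.mem_filter, Nat.mem_divisors] at hd
    obtain ⟨⟨hd, _⟩, k, rfl⟩ := hd
    have h1 := Nat.le_of_dvd (by omega) hd
    have h2 := Nat.pos_of_dvd_of_pos hd (by omega)
    have h3 : 2 * (k - 1) + 2 = k + k := by omega
    refine ⟨k - 1, ?_, h3⟩
    rw [Finset.mem_filter, Finset.mem_range, h3]
    exact ⟨by omega, hd⟩

lemma tauO_eq_coeff {n N : ℕ} (hn : 1 ≤ n) (hN : n < N) :
    tauO n = coeff n (∑ m ∈ Finset.range N, (geo (X : ℤ⟦X⟧) N (2 * m + 1) - 1)) := by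
  rw [map_sum, Finset.sum_congr rfl fun m _ => coeff_geo_sub_one hn hN (k := 2 * m + 1) (by omega),
    Finset.sum_boole, tauO]
  congr 1
  symm
  refine Finset.card_bij (fun m _ => 2 * m + 1) ?_ ?_ ?_
  · intro m hm
    rw [Finset.mem_filter] at hm
    rw [Finset.mem_filter, Nat.mem_divisors]
    exact ⟨⟨hm.2, by omega⟩, ⟨m, rfl⟩⟩
  · intro a _ b _ h
    omega
  · intro d hd
    rw [Finset.mem_filter, Nat.mem_divisors] at hd
    obtain ⟨⟨hd, _⟩, k, rfl⟩ := hd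
    have h1 := Nat.le_of_dvd (by omega) hd
    refine ⟨k, ?_, rfl⟩
    rw [Finset.mem_filter, Finset.mem_range]
    exact ⟨by omega, hd⟩

/-- `series_identity` for the class of `X` modulo `X ^ N`. -/
lemma X_pow_dvd_series (N : ℕ) :
    (X : ℤ⟦X⟧) ^ N ∣ (X - 1) * ∑ m ∈ Finset.range N, (geo X N (2 * m + 2) - 1) * oddPoch X 0 m -
      X * (∑ m ∈ Finset.range N, (geo X N (2 * m + 2) - 1) * invPoch X N 0 m +
        ∑ m ∈ Finset.range N, (geo X N (2 * m + 2) - 1) -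
        ∑ m ∈ Finset.range N, (geo X N (2 * m + 1) - 1)) := by
  rw [← Ideal.mem_span_singleton, ← Ideal.Quotient.eq]
  have hq : (Ideal.Quotient.mk (Ideal.span {(X : ℤ⟦X⟧) ^ N}) X) ^ N = 0 := by
    rw [← map_pow, Ideal.Quotient.eq_zero_iff_mem]
    exact Ideal.mem_span_singleton_self _
  have h := series_identity hq
  simp only [geo, oddPoch, invPoch, altGeo] at h ⊢
  simpa only [map_mul, map_sub, map_add, map_sum, map_prod, map_pow, map_neg, map_one] using h

end Partitions
end P1P2

/-- Theorem 1.3, equation (1.11): `p₁(n) - p₁(n+1) = p₂(n) + τ_e(n) - τ_o(n)` for `n ≥ 1`. -/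
theorem p1_sub_p1_succ (n : ℕ) (hn : 1 ≤ n) :
    p1 n - p1 (n + 1) = p2 n + tauE n - tauO n := by
  have h := PowerSeries.X_pow_dvd_iff.mp (P1P2.X_pow_dvd_series (n + 2)) (n + 1) (by omega)
  rw [map_sub, sub_mul, one_mul, map_sub, PowerSeries.coeff_succ_X_mul,
    PowerSeries.coeff_succ_X_mul, map_sub, map_add,
    ← P1P2.p1_eq_coeff hn (by omega), ← P1P2.p1_eq_coeff (by omega) (by omega),
    ← P1P2.p2_eq_coeff hn (by omega), ← P1P2.tauE_eq_coeff hn (by omega),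
    ← P1P2.tauO_eq_coeff hn (by omega)] at h
  exact sub_eq_zero.mp h
end

section
/- For every integer N ≥ 1, p₁(N) = Σ_{n=1}^{N−1} ( τ_o(n) − τ_e(n) − p₂(n) ), where p₁, p₂, τ_e, τ_o are as defined in the context. -/
/-!
Let `A`, `B`, `C` be the generating functions of `p₁`, `p₂` and `τ_o - τ_e` in positive degrees.
The claim is equivalent to `p₁(1) = 0` and `(1 - q) A + q B = q C`.

Sorting partitions by their largest part `2m` gives
`A = ∑_{m≥1} q^{2m} (q; q²)_{m-1} / (1 - q^{2m})` and
`B = ∑_{m≥1} q^{2m} / ((1 - q^{2m}) (-q; q)_{m-1})` (`coeff_A`, `coeff_B`), while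
`C = -∑_{l≥1} (-1)^l q^l / (1 - q^l)` (`coeff_C`).

The identity between them comes from computing in two ways (`double_sum`) the double series
`∑_{k,l≥1} (-1)^k q^{k+l} (q; q)_{k+l-1} / ((q; q)_k (q; q)_l)`.
* For fixed `l` the `q`-binomial theorem (`binomSeries_eq`) gives
  `q^l / (1 - q^l) * (1 / (-q; q)_l - 1)`.
* For fixed `k + l = L` one gets `q^L / (1 - q^L)` times the alternating sum of the `q`-binomial
  coefficients `[L, k]` over `0 < k < L`. By Gauss, the full alternating sum is `(q; q²)_{L/2}` for
  even `L` and `0` for odd `L` (`qPoch_mul_altConv_even`, `altConv_odd`).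

Hence `∑ q^l / ((1 - q^l) (-q; q)_l) - ∑ q^{2m} (q; q²)_m / (1 - q^{2m}) = C`. Passing from the first
sum to `B` and from the second to `-(1 - q) A / q` costs two telescoping sums, which cancel by
Euler's identity `(q; q²)_∞ = 1 / (-q; q)_∞` (`oddPoch_eq_shiftProd`).

To avoid questions of convergence, the identity is proved in an arbitrary commutative ring with
an element `q` satisfying `q^M = 0`, where all series are finite sums (`ring_identity`). It is
then applied to `ℤ⟦X⟧ / (X^M)` (`coeff_identity`).
-/

open scoped Classical

/-! ### The `q`-series identity -/

section RingIdentity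

open Finset

variable {R : Type*} [CommRing R]

/-- The `q`-Pochhammer product `(q; q)_n = ∏_{i=1}^n (1 - q^i)`. -/
def qPoch (q : R) (n : ℕ) : R := ∏ i ∈ range n, (1 - q ^ (i + 1))

/-- The product `(q; q²)_n = ∏_{i=1}^n (1 - q^{2i-1})`. -/
def oddPoch (q : R) (n : ℕ) : R := ∏ i ∈ range n, (1 - q ^ (2 * i + 1))

/-- The product `u 1 * ⋯ * u n`. With `u i` an inverse of `1 - q^i` it is `1/(q; q)_n`,
and with `u i` an inverse of `1 + q^i` it is `1/(-q; q)_n`. -/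
def shiftProd (u : ℕ → R) (n : ℕ) : R := ∏ i ∈ range n, u (i + 1)

/-- The alternating convolution `∑_{a+b=L} (-1)^a / ((q; q)_a (q; q)_b)`. -/
def altConv (w : ℕ → R) (L : ℕ) : R :=
  ∑ p ∈ antidiagonal L, (-1) ^ p.1 * shiftProd w p.1 * shiftProd w p.2

lemma qPoch_succ (q : R) (n : ℕ) : qPoch q (n + 1) = qPoch q n * (1 - q ^ (n + 1)) :=
  prod_range_succ _ _

lemma oddPoch_succ (q : R) (n : ℕ) :
    oddPoch q (n + 1) = oddPoch q n * (1 - q ^ (2 * n + 1)) :=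
  prod_range_succ _ _

lemma shiftProd_succ (u : ℕ → R) (n : ℕ) : shiftProd u (n + 1) = shiftProd u n * u (n + 1) :=
  prod_range_succ _ _

lemma shiftProd_zero (u : ℕ → R) : shiftProd u 0 = 1 := prod_range_zero _

lemma qPoch_zero (q : R) : qPoch q 0 = 1 := prod_range_zero _

lemma oddPoch_zero (q : R) : oddPoch q 0 = 1 := prod_range_zero _

variable {q : R} {w v : ℕ → R}

lemma qPoch_mul_shiftProd (hw : ∀ k, (1 - q ^ (k + 1)) * w (k + 1) = 1) (n : ℕ) :
    qPoch q n * shiftProd w n = 1 := by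
  induction n with
  | zero => simp [qPoch_zero, shiftProd_zero]
  | succ n ih =>
    rw [qPoch_succ, shiftProd_succ]
    linear_combination (1 - q ^ (n + 1)) * w (n + 1) * ih + hw n

lemma one_sub_mul_shiftProd (hw : ∀ k, (1 - q ^ (k + 1)) * w (k + 1) = 1) (n : ℕ) :
    (1 - q ^ (n + 1)) * shiftProd w (n + 1) = shiftProd w n := by
  rw [shiftProd_succ]
  linear_combination shiftProd w n * hw n

/-- Splitting `1 - q^{a+b} = (1 - q^a) + q^a (1 - q^b)` lowers one of the two indices. -/
lemma altConv_step (hw : ∀ k, (1 - q ^ (k + 1)) * w (k + 1) = 1) (L : ℕ) :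
    (1 - q ^ (L + 1)) * altConv w (L + 1) =
      -∑ p ∈ antidiagonal L, (-1) ^ p.1 * ((1 - q ^ p.1) * shiftProd w p.1) * shiftProd w p.2 := by
  have h1 : (1 - q ^ (L + 1)) * altConv w (L + 1) =
      (∑ p ∈ antidiagonal (L + 1),
        (-1) ^ p.1 * ((1 - q ^ p.1) * shiftProd w p.1) * shiftProd w p.2) +
      ∑ p ∈ antidiagonal (L + 1),
        (-1) ^ p.1 * (q ^ p.1 * shiftProd w p.1) * ((1 - q ^ p.2) * shiftProd w p.2) := by
    rw [altConv, mul_sum, ← sum_add_distrib]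
    refine sum_congr rfl fun p hp => ?_
    rw [← mem_antidiagonal.1 hp, pow_add]
    ring
  rw [h1, Nat.sum_antidiagonal_succ, Nat.sum_antidiagonal_succ']
  simp only [one_sub_mul_shiftProd hw, pow_zero, sub_self, zero_mul, mul_zero, zero_add]
  rw [← sum_add_distrib, ← sum_neg_distrib]
  refine sum_congr rfl fun p _ => ?_
  ring

lemma altConv_rec (hw : ∀ k, (1 - q ^ (k + 1)) * w (k + 1) = 1) (L : ℕ) :
    (1 - q ^ (L + 2)) * altConv w (L + 2) = altConv w L := by
  rw [altConv_step hw, Nat.sum_antidiagonal_succ]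
  simp only [one_sub_mul_shiftProd hw, pow_zero, sub_self, zero_mul, mul_zero, zero_add]
  rw [altConv, ← sum_neg_distrib]
  refine sum_congr rfl fun p _ => ?_
  ring

lemma altConv_rec' (hw : ∀ k, (1 - q ^ (k + 1)) * w (k + 1) = 1) (L : ℕ) :
    altConv w (L + 2) = w (L + 2) * altConv w L := by
  rw [← altConv_rec hw L]
  linear_combination -altConv w (L + 2) * hw (L + 1)

/-- Gauss's evaluation of the alternating sum of `q`-binomial coefficients, even case. -/
lemma qPoch_mul_altConv_even (hw : ∀ k, (1 - q ^ (k + 1)) * w (k + 1) = 1) (m : ℕ) :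
    qPoch q (2 * m) * altConv w (2 * m) = oddPoch q m := by
  induction m with
  | zero => simp [qPoch_zero, oddPoch_zero, altConv, shiftProd_zero]
  | succ m ih =>
    rw [oddPoch_succ, ← ih, ← altConv_rec hw (2 * m), show 2 * (m + 1) = 2 * m + 1 + 1 by ring,
      qPoch_succ, qPoch_succ]
    ring

lemma altConv_odd (hw : ∀ k, (1 - q ^ (k + 1)) * w (k + 1) = 1) (m : ℕ) :
    altConv w (2 * m + 1) = 0 := by
  induction m with
  | zero => simp [altConv, Nat.antidiagonal_succ, shiftProd]
  | succ m ih =>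
    rw [show 2 * (m + 1) + 1 = 2 * m + 1 + 2 by ring, altConv_rec' hw, ih, mul_zero]

/-- A truncation of the `q`-binomial series `∑_k (-q)^k (q; q)_{k+j} / ((q; q)_k (q; q)_j)`. -/
def binomSeries (q : R) (w : ℕ → R) (j n : ℕ) : R :=
  ∑ k ∈ range n, (-1) ^ k * q ^ k * (qPoch q (k + j) * shiftProd w k * shiftProd w j)

lemma binomSeries_succ (q : R) (w : ℕ → R) (j n : ℕ) :
    binomSeries q w j (n + 1) = binomSeries q w j n +
      (-1) ^ n * q ^ n * (qPoch q (n + j) * shiftProd w n * shiftProd w j) :=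
  sum_range_succ _ _

/-- The `q`-Pascal rule summed over `k`, with the error caused by truncation. -/
lemma binomSeries_rec (hw : ∀ k, (1 - q ^ (k + 1)) * w (k + 1) = 1) (j n : ℕ) :
    (1 + q ^ (j + 2)) * binomSeries q w (j + 1) (n + 1) = binomSeries q w j (n + 1) +
      (-1) ^ n * q ^ (n + j + 2) *
        (qPoch q (n + (j + 1)) * shiftProd w n * shiftProd w (j + 1)) := by
  induction n with
  | zero =>
    have h0 := qPoch_mul_shiftProd hw j
    have h1 := qPoch_mul_shiftProd hw (j + 1)
    simp only [binomSeries, zero_add, sum_range_one, shiftProd_zero, pow_zero, one_mul, mul_one]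
    linear_combination h1 - h0
  | succ n ih =>
    rw [binomSeries_succ q w (j + 1), mul_add, ih, binomSeries_succ q w j (n + 1)]
    rw [show n + 1 + (j + 1) = n + (j + 1) + 1 by ring, show n + 1 + j = n + (j + 1) by ring,
      qPoch_succ q (n + (j + 1)), ← one_sub_mul_shiftProd hw n, ← one_sub_mul_shiftProd hw j]
    ring

/-- The `q`-binomial theorem for `1/(-q; q)_{j+1}`. -/
lemma binomSeries_eq (hw : ∀ k, (1 - q ^ (k + 1)) * w (k + 1) = 1)
    (hv : ∀ k, (1 + q ^ (k + 1)) * v (k + 1) = 1) {M : ℕ} (hM : q ^ M = 0) (j : ℕ) :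
    binomSeries q w j (M + 1) = shiftProd v (j + 1) := by
  induction j with
  | zero =>
    have h : ∀ n, (1 + q) * binomSeries q w 0 n = 1 - (-1) ^ n * q ^ n := by
      intro n
      induction n with
      | zero => simp [binomSeries]
      | succ n ih =>
        rw [binomSeries_succ, mul_add, ih, add_zero,
          qPoch_mul_shiftProd hw, shiftProd_zero]
        ring
    have h1 := h (M + 1)
    rw [pow_succ q, hM] at h1
    have h2 := hv 0
    simp only [shiftProd, zero_add, prod_range_one, pow_one] at h2 ⊢
    linear_combination v 1 * h1 - binomSeries q w 0 (M + 1) * h2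
  | succ j ih =>
    have h1 := binomSeries_rec hw j M
    rw [ih, show M + j + 2 = M + (j + 2) by ring, pow_add q M, hM] at h1
    have h2 := hv (j + 1)
    rw [shiftProd_succ]
    linear_combination v (j + 1 + 1) * h1 - binomSeries q w (j + 1) (M + 1) * h2

/-- Evaluation in two ways of
`∑_{k,l≥1} (-1)^k q^{k+l} (q; q)_{k+l-1} / ((q; q)_k (q; q)_l)`: summing over `k` first gives the
left side by the `q`-binomial theorem, collecting the terms with fixed `k + l` gives the right
side. -/
lemma double_sum (hw : ∀ k, (1 - q ^ (k + 1)) * w (k + 1) = 1)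
    (hv : ∀ k, (1 + q ^ (k + 1)) * v (k + 1) = 1) {M : ℕ} (hM : q ^ M = 0) :
    ∑ l ∈ range M, q ^ (l + 1) * w (l + 1) * (shiftProd v (l + 1) - 1) =
      ∑ m ∈ range M, q ^ (m + 2) *
        (qPoch q (m + 1) * altConv w (m + 2) - w (m + 2) * (1 + (-1) ^ m)) := by
  let t : ℕ → ℕ → R := fun l k =>
    (-1) ^ (k + 1) * q ^ (k + l + 2) * qPoch q (k + l + 1) * shiftProd w (k + 1) *
      shiftProd w (l + 1)
  have hrow : ∀ l, q ^ (l + 1) * w (l + 1) * (shiftProd v (l + 1) - 1) =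
      ∑ k ∈ range M, t l k := by
    intro l
    rw [← binomSeries_eq hw hv hM, binomSeries, sum_range_succ']
    have h0 := qPoch_mul_shiftProd hw l
    simp only [pow_zero, zero_add, shiftProd_zero, mul_one, h0, add_sub_cancel_right]
    rw [mul_sum]
    refine sum_congr rfl fun k _ => ?_
    simp only [t, shiftProd_succ w l]
    rw [show k + 1 + l = k + l + 1 by ring]
    ring
  have hcut : ∀ l ∈ range M, ∑ k ∈ range M, t l k = ∑ k ∈ range (M - l), t l k := by
    intro l hl
    symm
    refine sum_subset (range_mono (Nat.sub_le _ _)) fun k _ hk => ?_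
    rw [mem_range, not_lt] at hk
    have : q ^ (k + l + 2) = 0 := pow_eq_zero_of_le (by omega) hM
    simp [t, this]
  have hdiag : ∀ m, ∑ k ∈ range (m + 1), t k (m - k) = q ^ (m + 2) *
      (qPoch q (m + 1) * altConv w (m + 2) - w (m + 2) * (1 + (-1) ^ m)) := by
    intro m
    rw [← Nat.sum_antidiagonal_eq_sum_range_succ (fun l k => t l k),
      ← Nat.sum_antidiagonal_swap]
    rw [altConv, Nat.sum_antidiagonal_succ, Nat.sum_antidiagonal_succ']
    have h1 := qPoch_mul_shiftProd hw (m + 1)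
    have h2 : ∑ p ∈ antidiagonal m, t p.2 p.1 = q ^ (m + 2) * (qPoch q (m + 1) *
        ∑ p ∈ antidiagonal m, (-1) ^ (p.1 + 1) * shiftProd w (p.1 + 1) *
          shiftProd w (p.2 + 1)) := by
      rw [mul_sum, mul_sum]
      refine sum_congr rfl fun p hp => ?_
      simp only [t]
      rw [mem_antidiagonal.1 hp]
      ring
    simp only [Prod.fst_swap, Prod.snd_swap]
    rw [h2]
    simp only [shiftProd_zero, shiftProd_succ w (m + 1)]
    linear_combination -(q ^ (m + 2) * w (m + 2) * (1 + (-1) ^ m)) * h1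
  rw [sum_congr rfl fun l _ => hrow l, sum_congr rfl hcut, ← sum_range_diag_flip,
    sum_congr rfl fun m _ => hdiag m]

lemma sum_range_two_mul (f : ℕ → R) (M : ℕ) :
    ∑ m ∈ range (2 * M), f m = ∑ m ∈ range M, (f (2 * m) + f (2 * m + 1)) := by
  induction M with
  | zero => simp
  | succ M ih =>
    rw [show 2 * (M + 1) = 2 * M + 1 + 1 by ring, sum_range_succ, sum_range_succ, ih,
      sum_range_succ, add_assoc]

lemma sum_altConv (hw : ∀ k, (1 - q ^ (k + 1)) * w (k + 1) = 1) {M : ℕ} (hM : q ^ M = 0) :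
    ∑ m ∈ range M, q ^ (m + 2) * (qPoch q (m + 1) * altConv w (m + 2)) =
      ∑ m ∈ range M, q ^ (2 * m + 2) * w (2 * m + 2) * oddPoch q (m + 1) := by
  have h : ∑ m ∈ range M, q ^ (m + 2) * (qPoch q (m + 1) * altConv w (m + 2)) =
      ∑ m ∈ range (2 * M), q ^ (m + 2) * (qPoch q (m + 1) * altConv w (m + 2)) := by
    refine sum_subset (range_mono (by omega)) fun k _ hk => ?_
    rw [mem_range, not_lt] at hk
    rw [pow_eq_zero_of_le (by omega) hM, zero_mul]
  rw [h, sum_range_two_mul]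
  refine sum_congr rfl fun m _ => ?_
  rw [show 2 * m + 1 + 2 = 2 * (m + 1) + 1 by ring, altConv_odd hw,
    ← qPoch_mul_altConv_even hw, show 2 * (m + 1) = 2 * m + 1 + 1 by ring, qPoch_succ q (2 * m + 1)]
  linear_combination -(q ^ (2 * m + 2) * qPoch q (2 * m + 1) * altConv w (2 * m + 2)) *
    hw (2 * m + 1)

lemma sum_shiftProd_telescope (hv : ∀ k, (1 + q ^ (k + 1)) * v (k + 1) = 1) (n : ℕ) :
    ∑ m ∈ range n, q ^ (m + 1) * shiftProd v (m + 1) = 1 - shiftProd v n := by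
  induction n with
  | zero => simp [shiftProd_zero]
  | succ n ih =>
    rw [sum_range_succ, ih, shiftProd_succ]
    linear_combination shiftProd v n * hv n

lemma sum_oddPoch_telescope (n : ℕ) :
    ∑ m ∈ range n, q ^ (2 * m + 1) * oddPoch q m = 1 - oddPoch q n := by
  induction n with
  | zero => simp [oddPoch_zero]
  | succ n ih =>
    rw [sum_range_succ, ih, oddPoch_succ]
    ring

lemma oddPoch_mul_qPoch (hv : ∀ k, (1 + q ^ (k + 1)) * v (k + 1) = 1) (n : ℕ) :
    oddPoch q n * qPoch q n = qPoch q (2 * n) * shiftProd v n := by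
  induction n with
  | zero => simp [oddPoch_zero, qPoch_zero, shiftProd_zero]
  | succ n ih =>
    rw [oddPoch_succ, qPoch_succ, show 2 * (n + 1) = 2 * n + 1 + 1 by ring, qPoch_succ,
      qPoch_succ, shiftProd_succ]
    linear_combination (1 - q ^ (2 * n + 1)) * (1 - q ^ (n + 1)) * ih -
      qPoch q (2 * n) * shiftProd v n * (1 - q ^ (2 * n + 1)) * (1 - q ^ (n + 1)) * hv n

/-- Euler's identity `(q; q²)_∞ = 1/(-q; q)_∞` modulo `q^M`. -/
lemma oddPoch_eq_shiftProd (hw : ∀ k, (1 - q ^ (k + 1)) * w (k + 1) = 1)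
    (hv : ∀ k, (1 + q ^ (k + 1)) * v (k + 1) = 1) {M : ℕ} (hM : q ^ M = 0) :
    oddPoch q M = shiftProd v M := by
  have h : qPoch q (2 * M) = qPoch q M := by
    rw [two_mul, qPoch, prod_range_add, ← qPoch]
    rw [prod_eq_one, mul_one]
    intro x _
    rw [pow_eq_zero_of_le (by omega) hM, sub_zero]
  have h1 := oddPoch_mul_qPoch hv M
  rw [h] at h1
  have h2 := qPoch_mul_shiftProd hw M
  linear_combination shiftProd w M * h1 - (oddPoch q M - shiftProd v M) * h2

/-- The generating function identity behind the theorem, modulo `q^M`: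
`(1 - q) A + q B = q C`, where `A`, `B`, `C` are the generating functions of `p₁`, `p₂` and
`τ_o - τ_e` in positive degrees. -/
theorem ring_identity (hw : ∀ k, (1 - q ^ (k + 1)) * w (k + 1) = 1)
    (hv : ∀ k, (1 + q ^ (k + 1)) * v (k + 1) = 1) {M : ℕ} (hM : q ^ M = 0) :
    (1 - q) * ∑ m ∈ range M, q ^ (2 * m + 2) * w (2 * m + 2) * oddPoch q m +
      q * ∑ m ∈ range M, q ^ (2 * m + 2) * w (2 * m + 2) * shiftProd v m =
    q * ∑ l ∈ range M, (-1) ^ l * (q ^ (l + 1) * w (l + 1)) := by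
  have hB : ∑ l ∈ range M, q ^ (l + 1) * w (l + 1) * shiftProd v (l + 1) =
      ∑ m ∈ range M, q ^ (2 * m + 2) * w (2 * m + 2) * shiftProd v m +
        ∑ m ∈ range M, q ^ (m + 1) * shiftProd v (m + 1) := by
    rw [← sum_add_distrib]
    refine sum_congr rfl fun m _ => ?_
    have h1 := hw m
    have h2 := hv m
    have h3 := hw (2 * m + 1)
    -- `1/(1 - q^(2m+2))` factors as `1/(1 - q^(m+1)) * 1/(1 + q^(m+1))`
    have h4 : w (2 * m + 2) = w (m + 1) * v (m + 1) := by
      rw [show 2 * m + 1 + 1 = 2 * m + 2 by ring] at h3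
      linear_combination w (m + 1) * v (m + 1) * h3 - w (2 * m + 2) * (1 + q ^ (m + 1)) *
        v (m + 1) * h1 - w (2 * m + 2) * h2
    rw [h4, shiftProd_succ]
    linear_combination q ^ (m + 1) * shiftProd v m * v (m + 1) * h1
  have hS : q * ∑ m ∈ range M, q ^ (2 * m + 2) * w (2 * m + 2) * oddPoch q (m + 1) =
      (q - 1) * ∑ m ∈ range M, q ^ (2 * m + 2) * w (2 * m + 2) * oddPoch q m +
        q * ∑ m ∈ range M, q ^ (2 * m + 1) * oddPoch q m := by
    rw [mul_sum, mul_sum, mul_sum, ← sum_add_distrib]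
    refine sum_congr rfl fun m _ => ?_
    rw [oddPoch_succ]
    linear_combination q ^ (2 * m + 2) * oddPoch q m * hw (2 * m + 1)
  have hC : ∑ m ∈ range M, q ^ (m + 2) * (w (m + 2) * (1 + (-1) ^ m)) =
      ∑ l ∈ range M, q ^ (l + 1) * w (l + 1) -
        ∑ l ∈ range M, (-1) ^ l * (q ^ (l + 1) * w (l + 1)) := by
    have h := sum_range_succ' (fun l => q ^ (l + 1) * (w (l + 1) * (1 - (-1) ^ l))) M
    rw [sum_range_succ, pow_succ, hM] at h
    simp only [pow_zero, sub_self, mul_zero, zero_mul, add_zero] at h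
    rw [← sum_sub_distrib]
    refine Eq.trans ?_ (h.symm.trans ?_) <;> refine sum_congr rfl fun m _ => by ring
  have hZ := double_sum hw hv hM
  simp only [mul_sub, mul_one, sum_sub_distrib] at hZ
  rw [sum_altConv hw hM, hC, hB, sum_shiftProd_telescope hv] at hZ
  rw [sum_oddPoch_telescope, oddPoch_eq_shiftProd hw hv hM] at hS
  linear_combination q * hZ + hS

end RingIdentity

/-! ### Generating functions of partitions with given largest part -/

section GeneratingFunctions

open Finset PowerSeries
open scoped PowerSeries.WithPiTopology

/-- The geometric series `1/(1 - X^k) = ∑_{k ∣ n} X^n`, meaningful for `k ≥ 1`. -/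
noncomputable def geomSeries (k : ℕ) : ℤ⟦X⟧ := PowerSeries.mk fun n => if k ∣ n then 1 else 0

/-- The series `1/(1 + X^k)`, written as `(1 - X^k)/(1 - X^{2k})`, meaningful for `k ≥ 1`. -/
noncomputable def altGeomSeries (k : ℕ) : ℤ⟦X⟧ := (1 - X ^ k) * geomSeries (2 * k)

lemma one_sub_mul_geomSeries (k : ℕ) :
    (1 - (X : ℤ⟦X⟧) ^ (k + 1)) * geomSeries (k + 1) = 1 := by
  ext n
  rw [sub_mul, one_mul, map_sub, coeff_X_pow_mul', geomSeries, coeff_mk, coeff_one]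
  by_cases hn : k + 1 ≤ n
  · have h : k + 1 ∣ n - (k + 1) ↔ k + 1 ∣ n := by
      rw [← Nat.dvd_add_self_right, Nat.sub_add_cancel hn]
    rw [if_pos hn, coeff_mk, if_congr h rfl rfl, sub_self, if_neg (by omega : n ≠ 0)]
  · rw [if_neg hn, sub_zero]
    refine if_congr ⟨fun h => ?_, fun h => h ▸ dvd_zero _⟩ rfl rfl
    exact Nat.eq_zero_of_dvd_of_lt h (by omega)

lemma one_add_mul_altGeomSeries (k : ℕ) :
    (1 + (X : ℤ⟦X⟧) ^ (k + 1)) * altGeomSeries (k + 1) = 1 := by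
  have h := one_sub_mul_geomSeries (2 * k + 1)
  rw [show 2 * k + 1 + 1 = 2 * (k + 1) by ring] at h
  rw [altGeomSeries]
  linear_combination h

lemma coeff_X_pow_mul_geomSeries (l n : ℕ) (hn : n ≠ 0) :
    coeff n ((X : ℤ⟦X⟧) ^ (l + 1) * geomSeries (l + 1)) = if l + 1 ∣ n then 1 else 0 := by
  have h : (X : ℤ⟦X⟧) ^ (l + 1) * geomSeries (l + 1) = geomSeries (l + 1) - 1 := by
    linear_combination -one_sub_mul_geomSeries l
  rw [h, map_sub, coeff_one, if_neg hn, sub_zero, geomSeries, coeff_mk]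

/-- The contribution of the part `i` to a partition generating function, when `c ≥ 1` copies
of `i` carry the weight `χ i c`. -/
noncomputable def partFactor (χ : ℕ → ℕ → ℤ) (i : ℕ) : ℤ⟦X⟧ :=
  1 + ∑' j, C (χ i (j + 1)) * (X : ℤ⟦X⟧) ^ (i * (j + 1))

lemma genFun_eq_prod (f : ℕ → ℕ → ℤ) (K : ℕ) (hf : ∀ i c, K < i → f i c = 0) :
    Nat.Partition.genFun f = ∏ i ∈ range K, partFactor f (i + 1) := by
  have h := Nat.Partition.hasProd_genFun f
  simp only [smul_eq_C_mul] at h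
  refine h.unique (hasProd_prod_of_ne_finset_one fun i hi => ?_)
  rw [mem_range, not_lt] at hi
  simp [hf (i + 1) _ (by omega)]

lemma partFactor_congr {f g : ℕ → ℕ → ℤ} {i : ℕ} (h : ∀ c, f i (c + 1) = g i (c + 1)) :
    partFactor f i = partFactor g i := by
  simp only [partFactor, h]

lemma partFactor_zero {f : ℕ → ℕ → ℤ} {i : ℕ} (h : ∀ c, f i (c + 1) = 0) :
    partFactor f i = 1 := by
  simp [partFactor, h]

lemma partFactor_pow (a : ℤ) {f : ℕ → ℕ → ℤ} {i : ℕ}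
    (h : ∀ c, f (i + 1) (c + 1) = a ^ (c + 1)) :
    (1 - C a * (X : ℤ⟦X⟧) ^ (i + 1)) * partFactor f (i + 1) = 1 := by
  have hc : constantCoeff (C a * (X : ℤ⟦X⟧) ^ (i + 1)) = 0 := by simp
  have hs := WithPiTopology.summable_pow_of_constantCoeff_eq_zero hc
  have : partFactor f (i + 1) = ∑' j, (C a * (X : ℤ⟦X⟧) ^ (i + 1)) ^ j := by
    rw [hs.tsum_eq_zero_add, pow_zero, partFactor]
    congr 2
    ext1 j
    rw [h, mul_pow, map_pow, pow_mul]
  rw [this, WithPiTopology.one_sub_mul_tsum_pow_of_constantCoeff_eq_zero hc]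

lemma partFactor_single {f : ℕ → ℕ → ℤ} {i : ℕ}
    (h : ∀ c, f (i + 1) (c + 1) = if c = 0 then -1 else 0) :
    partFactor f (i + 1) = 1 - X ^ (i + 1) := by
  rw [partFactor, tsum_eq_single 0]
  · simp [h, sub_eq_add_neg]
  · intro j hj
    simp [h, hj]

lemma sup_mem_parts {s : Multiset ℕ} (h : 0 < s.sup) : s.sup ∈ s := by
  induction s using Multiset.induction with
  | empty => simp at h
  | cons a s ih =>
    rw [Multiset.sup_cons] at h ⊢
    rcases le_total s.sup a with h1 | h1
    · simp [sup_eq_left.2 h1]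
    · rw [sup_eq_right.2 h1] at h ⊢
      exact Multiset.mem_cons_of_mem (ih h)

/-- The partitions with largest part exactly `s` are isolated by subtracting, from the weighted
sum over partitions with parts at most `s`, the one over partitions with parts below `s`. -/
lemma prod_sub_prod {n : ℕ} (p : n.Partition) {s : ℕ} (hs : 0 < s) (χ : ℕ → ℕ → ℤ) :
    p.parts.toFinsupp.prod (fun i c => if i < s then χ i c else if i = s then 1 else 0) -
      p.parts.toFinsupp.prod (fun i c => if i < s then χ i c else 0) =
    if p.parts.sup = s then
      ∏ i ∈ p.parts.toFinset with i < s, χ i (p.parts.count i) else 0 := by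
  simp only [Finsupp.prod, Multiset.toFinsupp_support, Multiset.toFinsupp_apply]
  have hle : ∀ i ∈ p.parts, i ≤ p.parts.sup := fun i hi => Multiset.le_sup hi
  rcases lt_trichotomy p.parts.sup s with h | h | h
  · rw [if_neg h.ne, sub_eq_zero]
    refine prod_congr rfl fun i hi => ?_
    have := hle i (Multiset.mem_toFinset.1 hi)
    rw [if_pos (by omega), if_pos (by omega)]
  · have hmem : s ∈ p.parts := h ▸ sup_mem_parts (by omega)
    rw [if_pos h, prod_filter]
    rw [prod_eq_zero (f := fun i => if i < s then χ i (p.parts.count i) else 0)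
      (Multiset.mem_toFinset.2 hmem) (by simp), sub_zero]
    rw [← prod_filter, ← prod_filter_mul_prod_filter_not p.parts.toFinset (· < s), prod_ite_of_true
      (fun i hi => (mem_filter.1 hi).2)]
    conv_rhs => rw [← mul_one (∏ i ∈ p.parts.toFinset with i < s, χ i (p.parts.count i))]
    congr 1
    refine prod_eq_one fun i hi => ?_
    rw [mem_filter] at hi
    have := hle i (Multiset.mem_toFinset.1 hi.1)
    rw [if_neg hi.2, if_pos (by omega)]
  · have hmem := sup_mem_parts (show 0 < p.parts.sup by omega)
    rw [if_neg h.ne', prod_eq_zero (Multiset.mem_toFinset.2 hmem),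
      prod_eq_zero (Multiset.mem_toFinset.2 hmem), sub_zero]
    · rw [if_neg (by omega)]
    · rw [if_neg (by omega), if_neg (by omega)]

/-- Generating function of the partitions with largest part `t + 1`, the smaller parts being
weighted by `χ`. -/
lemma coeff_prod_partFactor (χ : ℕ → ℕ → ℤ) (t n : ℕ) :
    coeff n (X ^ (t + 1) * geomSeries (t + 1) * ∏ i ∈ range t, partFactor χ (i + 1)) =
      ∑ p : n.Partition, if p.parts.sup = t + 1 then
        ∏ i ∈ p.parts.toFinset with i < t + 1, χ i (p.parts.count i) else 0 := by
  have h1 := genFun_eq_prod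
    (fun i c => if i < t + 1 then χ i c else if i = t + 1 then 1 else 0) (t + 1)
    (fun i c hi => by rw [if_neg (by omega), if_neg (by omega)])
  have h2 := genFun_eq_prod (fun i c => if i < t + 1 then χ i c else 0) t
    (fun i c hi => by rw [if_neg (by omega)])
  rw [prod_range_succ] at h1
  have h3 : ∀ i ∈ range t, partFactor
      (fun i c => if i < t + 1 then χ i c else if i = t + 1 then 1 else 0) (i + 1) =
      partFactor χ (i + 1) := fun i hi =>
    partFactor_congr fun c => if_pos (by rw [mem_range] at hi; omega)
  have h4 : ∀ i ∈ range t, partFactor (fun i c => if i < t + 1 then χ i c else 0) (i + 1) =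
      partFactor χ (i + 1) := fun i hi =>
    partFactor_congr fun c => if_pos (by rw [mem_range] at hi; omega)
  have h5 := partFactor_pow 1 (i := t)
    (f := fun i c => if i < t + 1 then χ i c else if i = t + 1 then 1 else 0) (by simp)
  rw [prod_congr rfl h3] at h1
  rw [prod_congr rfl h4] at h2
  simp_rw [← prod_sub_prod _ (Nat.succ_pos t)]
  rw [sum_sub_distrib, ← Nat.Partition.coeff_genFun, ← Nat.Partition.coeff_genFun, ← map_sub,
    h1, h2]
  congr 1
  rw [map_one, one_mul] at h5
  generalize partFactor _ (t + 1) = F at h5 ⊢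
  have h6 := one_sub_mul_geomSeries t
  linear_combination (∏ i ∈ range t, partFactor χ (i + 1)) *
    (-geomSeries (t + 1) * h5 + (F - 1) * h6)

end GeneratingFunctions

/-! ### The generating functions of `p₁`, `p₂` and `τ_o - τ_e` -/

section Weights

open Finset PowerSeries

/-- Weight of `c` copies of the part `i` in the partitions counted by `p₁` with largest part
`2m + 2`. -/
noncomputable def chi₁ (m i c : ℕ) : ℤ := if Odd i ∧ c = 1 ∧ i ≠ 2 * m + 1 then -1 else 0

/-- Weight of `c` copies of the part `i` in the partitions counted by `p₂` with largest part
`2m + 2`. -/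
noncomputable def chi₂ (m i c : ℕ) : ℤ := if i < m + 1 then (-1) ^ c else 0

lemma prod_chi₁ (m : ℕ) :
    ∏ i ∈ range (2 * m + 1), partFactor (chi₁ m) (i + 1) = oddPoch (X : ℤ⟦X⟧) m := by
  have h : ∀ j ≤ m, ∏ i ∈ range (2 * j), partFactor (chi₁ m) (i + 1) =
      oddPoch (X : ℤ⟦X⟧) j := by
    intro j
    induction j with
    | zero => simp [oddPoch_zero]
    | succ j ih =>
      intro hj
      rw [show 2 * (j + 1) = 2 * j + 1 + 1 by ring, prod_range_succ, prod_range_succ,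
        ih (by omega), oddPoch_succ, partFactor_single, partFactor_zero, mul_one]
      · intro c
        rw [chi₁, if_neg]
        rintro ⟨⟨k, hk⟩, -⟩
        omega
      · intro c
        rw [chi₁]
        refine if_congr ⟨fun h => by omega, fun h => ⟨⟨j, rfl⟩, by omega, by omega⟩⟩ rfl rfl
  rw [prod_range_succ, h m le_rfl, partFactor_zero, mul_one]
  intro c
  simp [chi₁]

lemma prod_chi₂ (m : ℕ) :
    ∏ i ∈ range (2 * m + 1), partFactor (chi₂ m) (i + 1) = shiftProd altGeomSeries m := by
  rw [shiftProd, ← prod_subset (range_mono (show m ≤ 2 * m + 1 by omega))]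
  · refine prod_congr rfl fun i hi => ?_
    rw [mem_range] at hi
    have h1 := partFactor_pow (-1) (f := chi₂ m) (i := i)
      (fun c => if_pos (by omega))
    have h2 := one_add_mul_altGeomSeries i
    rw [map_neg, map_one] at h1
    linear_combination altGeomSeries (i + 1) * h1 - partFactor (chi₂ m) (i + 1) * h2
  · intro i _ hi
    rw [mem_range, not_lt] at hi
    exact partFactor_zero fun c => if_neg (by omega)

lemma weight₁_eq {n : ℕ} (p : n.Partition) (m : ℕ) (h : p.parts.sup = 2 * m + 2) :
    (if P1Cond p then (-1 : ℤ) ^ (Multiset.card (p.parts.filter fun i => Odd i)) else 0) =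
      ∏ i ∈ p.parts.toFinset with i < 2 * m + 2, chi₁ m i (p.parts.count i) := by
  have hle : ∀ i ∈ p.parts, i ≤ 2 * m + 2 := fun i hi => h ▸ Multiset.le_sup hi
  split_ifs with hP
  · rw [P1Cond, h] at hP
    have h1 : ∀ i ∈ p.parts.toFinset.filter (· < 2 * m + 2),
        chi₁ m i (p.parts.count i) = -1 := by
      intro i hi
      rw [mem_filter, Multiset.mem_toFinset] at hi
      obtain ⟨ho, hc, hne⟩ := hP.2 i hi.1 hi.2
      exact if_pos ⟨ho, hc, by omega⟩
    rw [prod_congr rfl h1, prod_const]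
    have h2 : p.parts.filter (fun i => Odd i) =
        (p.parts.toFinset.filter (· < 2 * m + 2)).val := by
      ext i
      rw [Multiset.count_filter, Multiset.count_eq_of_nodup (Finset.nodup _)]
      simp only [mem_val, mem_filter, Multiset.mem_toFinset]
      by_cases hi : i ∈ p.parts
      · rcases (hle i hi).lt_or_eq with hlt | heq
        · obtain ⟨ho, hc, -⟩ := hP.2 i hi hlt
          rw [if_pos ho, hc, if_pos ⟨hi, hlt⟩]
        · rw [if_neg, if_neg (by omega)]
          rintro ⟨k, hk⟩
          omega
      · simp [hi]
    rw [h2, card_def]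
  · rw [P1Cond, h] at hP
    have h1 : ∃ i ∈ p.parts, i < 2 * m + 2 ∧
        ¬(Odd i ∧ p.parts.count i = 1 ∧ i ≠ 2 * m + 2 - 1) := by
      by_contra hcon
      push Not at hcon
      exact hP ⟨⟨m + 1, by ring⟩, fun i hi hlt => by
        have := hcon i hi hlt
        tauto⟩
    obtain ⟨i, hi, hlt, hne⟩ := h1
    symm
    refine prod_eq_zero (i := i) (by simp [hi, hlt]) (if_neg ?_)
    simpa using hne

lemma weight₂_eq {n : ℕ} (p : n.Partition) (m : ℕ) (h : p.parts.sup = 2 * m + 2) :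
    (if P2Cond p then
      (-1 : ℤ) ^ (Multiset.card p.parts - p.parts.count (p.parts.sup)) else 0) =
      ∏ i ∈ p.parts.toFinset with i < 2 * m + 2, chi₂ m i (p.parts.count i) := by
  have hle : ∀ i ∈ p.parts, i ≤ 2 * m + 2 := fun i hi => h ▸ Multiset.le_sup hi
  have hmem : 2 * m + 2 ∈ p.parts := h ▸ sup_mem_parts (by omega)
  rw [P2Cond, h]
  split_ifs with hP
  · have h1 : ∀ i ∈ p.parts.toFinset.filter (· < 2 * m + 2),
        chi₂ m i (p.parts.count i) = (-1) ^ p.parts.count i := by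
      intro i hi
      rw [mem_filter, Multiset.mem_toFinset] at hi
      have := hP.2 i hi.1
      exact if_pos (by omega)
    rw [prod_congr rfl h1, prod_pow_eq_pow_sum]
    congr 1
    rw [← Multiset.toFinset_sum_count_eq p.parts,
      ← sum_filter_add_sum_filter_not p.parts.toFinset (· < 2 * m + 2)]
    have h2 : p.parts.toFinset.filter (fun i => ¬ i < 2 * m + 2) = {2 * m + 2} := by
      ext i
      simp only [mem_filter, Multiset.mem_toFinset, mem_singleton]
      exact ⟨fun hi => by have := hle i hi.1; omega, fun hi => by subst hi; exact ⟨hmem, by omega⟩⟩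
    rw [h2, sum_singleton, Nat.add_sub_cancel]
  · have h1 : ∃ i ∈ p.parts, (2 * m + 2) / 2 ≤ i ∧ i ≤ 2 * m + 2 - 1 := by
      by_contra hcon
      push Not at hcon
      exact hP ⟨⟨m + 1, by ring⟩, fun i hi hlt => by
        have := hcon i hi hlt.1
        omega⟩
    obtain ⟨i, hi, h2, h3⟩ := h1
    symm
    exact prod_eq_zero (i := i) (by simp [hi]; omega) (if_neg (by omega))

/-- Sorting partitions of `n ≥ 1` with even largest part by that largest part. -/
lemma sum_by_sup {n M : ℕ} (hn : 1 ≤ n) (hM : n < M) (p : n.Partition) (a : ℤ)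
    (ha : ¬Even p.parts.sup → a = 0) :
    (∑ m ∈ range M, if p.parts.sup = 2 * m + 1 + 1 then a else 0) = a := by
  by_cases he : Even p.parts.sup
  · obtain ⟨k, hk⟩ := he
    have hpos : p.parts.sup ≠ 0 := by
      intro h0
      have h1 : p.parts = 0 := by
        refine Multiset.eq_zero_of_forall_notMem fun i hi => ?_
        have h2 : i ≤ p.parts.sup := Multiset.le_sup hi
        have h3 := p.parts_pos hi
        omega
      have h4 := p.parts_sum
      rw [h1, Multiset.sum_zero] at h4
      omega
    have hlt : p.parts.sup ≤ n := Multiset.sup_le.2 fun i hi => p.le_of_mem_parts hi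
    rw [sum_eq_single (k - 1)]
    · rw [if_pos (by omega)]
    · intro b _ hb
      rw [if_neg (by omega)]
    · intro hb
      rw [mem_range] at hb
      omega
  · rw [ha he]
    simp

lemma coeff_A {n M : ℕ} (hn : 1 ≤ n) (hM : n < M) :
    coeff n (∑ m ∈ range M, (X : ℤ⟦X⟧) ^ (2 * m + 2) * geomSeries (2 * m + 2) * oddPoch X m) =
      p1 n := by
  rw [map_sum, p1]
  simp_rw [← prod_chi₁]
  rw [sum_congr rfl fun m _ => coeff_prod_partFactor (chi₁ m) (2 * m + 1) n, sum_comm]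
  refine sum_congr rfl fun p _ => ?_
  refine Eq.trans ?_ (sum_by_sup hn hM p _ fun he => if_neg fun hP => he hP.1)
  refine sum_congr rfl fun m _ => ?_
  by_cases h : p.parts.sup = 2 * m + 1 + 1
  · rw [if_pos h, if_pos h]
    exact (weight₁_eq p m h).symm
  · rw [if_neg h, if_neg h]

lemma coeff_B {n M : ℕ} (hn : 1 ≤ n) (hM : n < M) :
    coeff n (∑ m ∈ range M, (X : ℤ⟦X⟧) ^ (2 * m + 2) * geomSeries (2 * m + 2) *
      shiftProd altGeomSeries m) = p2 n := by
  rw [map_sum, p2]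
  simp_rw [← prod_chi₂]
  rw [sum_congr rfl fun m _ => coeff_prod_partFactor (chi₂ m) (2 * m + 1) n, sum_comm]
  refine sum_congr rfl fun p _ => ?_
  refine Eq.trans ?_ (sum_by_sup hn hM p _ fun he => if_neg fun hP => he hP.1)
  refine sum_congr rfl fun m _ => ?_
  by_cases h : p.parts.sup = 2 * m + 1 + 1
  · rw [if_pos h, if_pos h]
    exact (weight₂_eq p m h).symm
  · rw [if_neg h, if_neg h]

lemma coeff_C {n M : ℕ} (hn : 1 ≤ n) (hM : n < M) :
    coeff n (∑ l ∈ range M, (-1) ^ l * ((X : ℤ⟦X⟧) ^ (l + 1) * geomSeries (l + 1))) =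
      tauO n - tauE n := by
  have h1 : ∀ l, coeff n ((-1) ^ l * ((X : ℤ⟦X⟧) ^ (l + 1) * geomSeries (l + 1))) =
      if l + 1 ∣ n then (if Odd (l + 1) then 1 else 0) - (if Even (l + 1) then 1 else 0)
        else 0 := by
    intro l
    have h := coeff_X_pow_mul_geomSeries l n (by omega)
    rcases Nat.even_or_odd l with hl | hl
    · rw [hl.neg_one_pow, one_mul, h, if_pos hl.add_one,
        if_neg (Nat.not_even_iff_odd.2 hl.add_one), sub_zero]
    · rw [hl.neg_one_pow, neg_one_mul, map_neg, h, if_pos hl.add_one,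
        if_neg (Nat.not_odd_iff_even.2 hl.add_one)]
      split_ifs <;> simp
  rw [map_sum, sum_congr rfl fun l _ => h1 l, tauO, tauE, card_filter, card_filter]
  push_cast
  have h2 := sum_range_succ' (fun l => if l ∣ n then
    (if Odd l then (1 : ℤ) else 0) - (if Even l then 1 else 0) else 0) M
  rw [if_neg (by rw [zero_dvd_iff]; omega), add_zero] at h2
  rw [← sum_sub_distrib, ← h2, ← sum_filter]
  refine sum_congr ?_ fun _ _ => rfl
  ext d
  simp only [mem_filter, mem_range, Nat.mem_divisors]
  exact ⟨fun h => ⟨h.2, by omega⟩, fun h => ⟨by have := Nat.le_of_dvd hn h.1; omega, h.1⟩⟩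

/-- The ring identity holds in `ℤ⟦X⟧ / (X^M)`, hence in `ℤ⟦X⟧` for the coefficients below
degree `M`. -/
lemma coeff_identity (M k : ℕ) (hk : k < M) :
    coeff k ((1 - X) * ∑ m ∈ range M,
        (X : ℤ⟦X⟧) ^ (2 * m + 2) * geomSeries (2 * m + 2) * oddPoch X m +
      X * ∑ m ∈ range M, (X : ℤ⟦X⟧) ^ (2 * m + 2) * geomSeries (2 * m + 2) *
        shiftProd altGeomSeries m) =
    coeff k (X * ∑ l ∈ range M, (-1) ^ l * ((X : ℤ⟦X⟧) ^ (l + 1) * geomSeries (l + 1))) := by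
  let φ := Ideal.Quotient.mk (Ideal.span {(X : ℤ⟦X⟧) ^ M})
  have hM : (φ X) ^ M = 0 := by
    rw [← map_pow]
    exact Ideal.Quotient.eq_zero_iff_mem.2 (Ideal.mem_span_singleton_self _)
  have h := ring_identity (q := φ X) (w := fun i => φ (geomSeries i))
    (v := fun i => φ (altGeomSeries i))
    (fun k => by simpa using congrArg φ (one_sub_mul_geomSeries k))
    (fun k => by simpa using congrArg φ (one_add_mul_altGeomSeries k)) hM
  have h1 : ∀ m, oddPoch (φ X) m = φ (oddPoch X m) := fun m => by simp [oddPoch, map_prod]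
  have h2 : ∀ m, shiftProd (fun i => φ (altGeomSeries i)) m = φ (shiftProd altGeomSeries m) :=
    fun m => by simp [shiftProd, map_prod]
  simp only [h1, h2] at h
  rw [← sub_eq_zero, ← map_sub]
  refine X_pow_dvd_iff.1 (Ideal.mem_span_singleton.1 (Ideal.Quotient.eq.1 ?_)) k hk
  simpa [φ, map_sum] using h

lemma p1_succ (n : ℕ) (hn : 1 ≤ n) : p1 (n + 1) = p1 n + (tauO n - tauE n - p2 n) := by
  have h := coeff_identity (n + 2) (n + 1) (by omega)
  rw [sub_mul, one_mul, map_add, map_sub, coeff_succ_X_mul, coeff_succ_X_mul, coeff_succ_X_mul,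
    coeff_A (by omega) (by omega), coeff_A hn (by omega), coeff_B hn (by omega),
    coeff_C hn (by omega)] at h
  linear_combination h

lemma p1_one : p1 1 = 0 := by
  rw [← coeff_A (M := 2) le_rfl (by omega), map_sum]
  refine sum_eq_zero fun m _ => ?_
  rw [mul_assoc, coeff_X_pow_mul', if_neg (by omega)]

end Weights

/-- Theorem 1.3, equation (1.12): `p₁(N) = Σ_{n=1}^{N-1} (τ_o(n) - τ_e(n) - p₂(n))` for `N ≥ 1`. -/
theorem p1_eq_sum (N : ℕ) (hN : 1 ≤ N) :
    p1 N = ∑ n ∈ Finset.Ico 1 N, (tauO n - tauE n - p2 n) := by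
  induction N, hN using Nat.le_induction with
  | base => simp [p1_one]
  | succ n hn ih => rw [Finset.sum_Ico_succ_top hn, ← ih, p1_succ n hn]
end
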